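/- Let E be a G-invariant Lebesgue-measurable subset of ℝ^d and let u be κ-harmonic in the upper half-space ℝ^{d+1}₊. Then the following are equivalent: (i) u has a finite non-tangential limit at (x,0) for almost every x ∈ E; (ii) u is non-tangentially bounded at (x,0) for almost every x ∈ E. -/

import Mathlib

open MeasureTheory Filter Metric
open scoped RealInnerProductSpace Topology

noncomputable section

/-- Euclidean space `ℝ^d`. -/
abbrev Ed (d : ℕ) : Type := EuclideanSpace ℝ (Fin d)

/-- The reflection `σ_α(x) = x - ⟨α,x⟩α` (for roots normalized by `⟨α,α⟩ = 2`). -/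
def reflAt {d : ℕ} (α x : Ed d) : Ed d := x - ⟪α, x⟫ • α

/-- The reflection group `G` generated by the reflections `σ_α`, `α ∈ R`, realized as the
submonoid of self-maps of `ℝ^d` generated by the reflections (each reflection is an
involution, so this is in fact a group of transformations). -/
def dunklGroup {d : ℕ} (R : Finset (Ed d)) : Submonoid (Function.End (Ed d)) :=
  Submonoid.closure {f : Function.End (Ed d) | ∃ α ∈ R, f = reflAt α}

/-- A (normalized) root system `R` with positive subsystem `Rp` and
`G`-invariant nonnegative multiplicity function `κ`. -/
structure IsRootSystem {d : ℕ} (R Rp : Finset (Ed d)) (κ : Ed d → ℝ) : Prop where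
  nonzero : ∀ α ∈ R, α ≠ (0 : Ed d)
  norm_two : ∀ α ∈ R, ⟪α, α⟫ = (2 : ℝ)
  refl_mem : ∀ α ∈ R, ∀ β ∈ R, reflAt α β ∈ R
  pos_sub : Rp ⊆ R
  pos_split : ∀ α ∈ R, (α ∈ Rp ∧ ¬(-α ∈ Rp)) ∨ (¬(α ∈ Rp) ∧ -α ∈ Rp)
  kappa_nonneg : ∀ α ∈ R, 0 ≤ κ α
  kappa_inv : ∀ σ ∈ dunklGroup R, ∀ α ∈ R, κ (σ α) = κ α

/-- `x ∈ ℝ^d` is regular if `⟨α,x⟩ ≠ 0` for all roots `α ∈ R`. -/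
def isRegular {d : ℕ} (R : Finset (Ed d)) (x : Ed d) : Prop :=
  ∀ α ∈ R, ⟪α, x⟫ ≠ (0 : ℝ)

/-- Second directional derivative of `u` at `p` in direction `v`. -/
def pd2 {d : ℕ} (u : Ed d × ℝ → ℝ) (p v : Ed d × ℝ) : ℝ :=
  fderiv ℝ (fun q => fderiv ℝ u q v) p v

/-- The Euclidean Laplacian on `ℝ^{d+1} = ℝ^d × ℝ`. -/
def lapE {d : ℕ} (u : Ed d × ℝ → ℝ) (p : Ed d × ℝ) : ℝ :=
  (∑ i : Fin d, pd2 u p (EuclideanSpace.single i 1, 0)) + pd2 u p (0, 1)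

/-- The Dunkl Laplacian `Δ_κ` on `ℝ^{d+1}` (the Dunkl operators act in the `x`-variables). -/
def dunklLap {d : ℕ} (Rp : Finset (Ed d)) (κ : Ed d → ℝ) (u : Ed d × ℝ → ℝ)
    (p : Ed d × ℝ) : ℝ :=
  lapE u p + 2 * ∑ α ∈ Rp, κ α *
    (fderiv ℝ u p (α, 0) / ⟪α, p.1⟫ - (u p - u (reflAt α p.1, p.2)) / ⟪α, p.1⟫ ^ 2)

/-- The open upper half-space `ℝ^{d+1}₊`. -/
def upperHS (d : ℕ) : Set (Ed d × ℝ) := {p | 0 < p.2}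

/-- `u` is `κ`-harmonic on `Ω`: `u` is `C²` on `Ω` and `Δ_κ u = 0` at every point of `Ω`
whose `x`-coordinate is regular. -/
def KHarmonicOn {d : ℕ} (R Rp : Finset (Ed d)) (κ : Ed d → ℝ) (u : Ed d × ℝ → ℝ)
    (Ω : Set (Ed d × ℝ)) : Prop :=
  ContDiffOn ℝ 2 u Ω ∧ ∀ p ∈ Ω, isRegular R p.1 → dunklLap Rp κ u p = 0

/-- The cone `Γ_a(x)` of aperture `a` with vertex `(x,0)`. -/
def cone {d : ℕ} (a : ℝ) (x : Ed d) : Set (Ed d × ℝ) :=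
  {p | 0 < p.2 ∧ dist p.1 x < a * p.2}

/-- The truncated cone `Γ_a^h(x)`. -/
def coneT {d : ℕ} (a h : ℝ) (x : Ed d) : Set (Ed d × ℝ) :=
  {p | 0 < p.2 ∧ p.2 < h ∧ dist p.1 x < a * p.2}

/-- `u` has a finite non-tangential limit at `(x,0)`. -/
def HasNTLimit {d : ℕ} (u : Ed d × ℝ → ℝ) (x : Ed d) : Prop :=
  ∀ a > (0 : ℝ), ∃ L : ℝ, Tendsto u (𝓝[cone a x] (x, (0 : ℝ))) (𝓝 L)

/-- `u` is non-tangentially bounded at `(x,0)`. -/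
def NTBounded {d : ℕ} (u : Ed d × ℝ → ℝ) (x : Ed d) : Prop :=
  ∃ a > (0 : ℝ), ∃ h > (0 : ℝ), ∃ M : ℝ, ∀ p ∈ coneT a h x, |u p| ≤ M

/-- A subset of `ℝ^d` is `G`-invariant. -/
def GInvSet {d : ℕ} (R : Finset (Ed d)) (E : Set (Ed d)) : Prop :=
  ∀ σ ∈ dunklGroup R, σ '' E = E

/-!
A function with a non-tangential limit at `(x,0)` is bounded on truncated cones with vertex `(x,0)`,
so only the passage from boundedness to limits needs an argument.

The reflections preserve Lebesgue measure and `E` is invariant, so for almost every `x ∈ E` the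
point `x` is regular and `u` is non-tangentially bounded at `x` and at all `σ_α x`. Each such `x`
belongs to one of countably many compact sets which stay away from the reflecting hyperplanes and
over which `u` and the functions `u ∘ σ_α` are uniformly bounded on cones of fixed aperture and
height. With the weight `w = ∏ |⟨α,x⟩|^κ(α)`, the equation `Δ_κ u = 0` expresses the Euclidean
Laplacian of `v = w u` through the values of `u` and `u ∘ σ_α` alone, without derivatives of `u`.
Over such a compact set, both `v` and its Laplacian are therefore bounded on the union of the cones,
and limits of `v` give limits of `u`.

It remains to show that a bounded function `v` with bounded Laplacian on the union of cones over a
compact set `F` has non-tangential limits almost everywhere on `F`. The translate of `v` upwards by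
`ε` is compared, by the maximum principle, with the Poisson integral of its trace; the difference is
dominated by a barrier made of the Poisson integral of the indicator of the complement of `F`, a
linear function of `y` and a concave quadratic function of `y`. The traces converge weakly along an
ultrafilter as `ε → 0`, so `v` differs from one Poisson integral by at most the barrier. Poisson
integrals converge non-tangentially almost everywhere, and the barrier tends to `0` at almost every
point of `F`.

Laplacians are understood as limits of second difference quotients, which is all that the maximum
principle requires and which makes Poisson integrals harmonic by dominated convergence.
-/

/-! ### Second differences and the generalized Laplacian -/

section SecondDifferences

variable {V : Type*} [AddCommGroup V] [Module ℝ V]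

/-- The symmetric second difference quotient of `w` at `p` in direction `e` with step `s`. -/
def secondDiffQuot (w : V → ℝ) (p e : V) (s : ℝ) : ℝ :=
  (w (p + s • e) + w (p - s • e) - 2 * w p) / s ^ 2

lemma secondDiffQuot_line (w : V → ℝ) (p e : V) (s : ℝ) :
    secondDiffQuot (fun t : ℝ ↦ w (p + t • e)) 0 1 s = secondDiffQuot w p e s := by
  simp [secondDiffQuot, sub_eq_add_neg]

lemma tendsto_secondDiffQuot_real {g g' : ℝ → ℝ} {L : ℝ}
    (hg : ∀ᶠ t in 𝓝 0, HasDerivAt g (g' t) t) (hg' : HasDerivAt g' L 0) :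
    Tendsto (secondDiffQuot g 0 1) (𝓝[>] 0) (𝓝 L) := by
  have hright : ∀ᶠ t in 𝓝[>] (0 : ℝ), HasDerivAt g (g' t) t := hg.filter_mono nhdsWithin_le_nhds
  have hneg : Tendsto Neg.neg (𝓝[>] (0 : ℝ)) (𝓝 0) := by
    simpa using (continuous_neg.tendsto (0 : ℝ)).mono_left nhdsWithin_le_nhds
  have hcont : ContinuousAt (fun t ↦ g t + g (-t) - 2 * g 0) 0 := by
    have h0 : ContinuousAt g 0 := hg.self_of_nhds.continuousAt
    have h0' : ContinuousAt (fun t ↦ g (-t)) 0 :=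
      ContinuousAt.comp (f := Neg.neg) (by simpa using h0) continuousAt_neg
    exact (h0.add h0').sub continuousAt_const
  have hquot : Tendsto (fun t ↦ (g' t - g' (-t)) / (2 * t)) (𝓝[>] 0) (𝓝 L) := by
    have hr := hg'.tendsto_slope_zero_right
    have hl := hg'.tendsto_slope_zero_left.comp (by simpa using tendsto_neg_nhdsGT (a := (0 : ℝ)))
    have h := (hr.add hl).div_const 2
    rw [add_self_div_two] at h
    refine h.congr' ?_
    filter_upwards [self_mem_nhdsWithin] with t (ht : 0 < t)
    simp only [zero_add, smul_eq_mul, Function.comp_apply]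
    field_simp
    ring
  have hlim := HasDerivAt.lhopital_zero_nhdsGT
    (f := fun t ↦ g t + g (-t) - 2 * g 0) (g := fun t ↦ t ^ 2)
    (f' := fun t ↦ g' t - g' (-t)) (g' := fun t ↦ 2 * t) ?_ ?_ ?_ ?_ ?_ hquot
  · exact hlim.congr fun s ↦ by simp [secondDiffQuot]
  · filter_upwards [hright, hneg.eventually hg] with t ht ht'
    exact ((ht.add (ht'.scomp t (hasDerivAt_neg t))).sub_const _).congr_deriv (by simp; ring)
  · exact .of_forall fun t ↦ by simpa using hasDerivAt_pow 2 t
  · filter_upwards [self_mem_nhdsWithin] with t (ht : 0 < t) using by positivity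
  · have h := hcont.tendsto.mono_left (nhdsWithin_le_nhds (s := Set.Ioi 0))
    rwa [neg_zero, show g 0 + g 0 - 2 * g 0 = 0 by ring] at h
  · simpa using ((continuous_pow 2).tendsto (0 : ℝ)).mono_left nhdsWithin_le_nhds

lemma abs_secondDiffQuot_real_le {g g' g'' : ℝ → ℝ} {s C : ℝ} (hs : 0 < s)
    (hg : ∀ t, |t| ≤ s → HasDerivAt g (g' t) t)
    (hg' : ∀ t, |t| ≤ s → HasDerivAt g' (g'' t) t)
    (hC : ∀ t, |t| ≤ s → |g'' t| ≤ C) :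
    |secondDiffQuot g 0 1 s| ≤ 2 * C := by
  have hC0 : 0 ≤ C := (abs_nonneg _).trans (hC 0 (by simpa using hs.le))
  have hodd : ∀ t ∈ Set.Icc 0 s, ‖g' t - g' (-t)‖ ≤ 2 * C * s := by
    intro t ht
    have h := (convex_Icc (-s) s).norm_image_sub_le_of_norm_hasDerivWithin_le
      (fun x hx ↦ (hg' x (abs_le.2 hx)).hasDerivWithinAt) (fun x hx ↦ hC x (abs_le.2 hx))
      (x := -t) (y := t) ⟨by linarith [ht.2], by linarith [ht.1]⟩ ⟨by linarith [ht.1], ht.2⟩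
    rw [Real.norm_eq_abs (t - -t), abs_of_nonneg (by linarith [ht.1])] at h
    nlinarith [ht.2]
  have heven : ∀ t ∈ Set.Icc 0 s,
      HasDerivWithinAt (fun t ↦ g t + g (-t)) (g' t - g' (-t)) (Set.Icc 0 s) t := by
    intro t ht
    have h := hg t (abs_le.2 ⟨by linarith [ht.1], ht.2⟩)
    have h' := hg (-t) (abs_le.2 ⟨by linarith [ht.2], by linarith [ht.1]⟩)
    exact ((h.add (h'.scomp t (hasDerivAt_neg t))).congr_deriv (by simp; ring)).hasDerivWithinAt
  have h := (convex_Icc 0 s).norm_image_sub_le_of_norm_hasDerivWithin_le heven hodd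
    (x := 0) (y := s) ⟨le_rfl, hs.le⟩ ⟨hs.le, le_rfl⟩
  simp only [Real.norm_eq_abs, neg_zero, sub_zero, abs_of_pos hs] at h
  have hsq : 0 < s ^ 2 := by positivity
  have hnum : g (0 + s • 1) + g (0 - s • 1) - 2 * g 0 = g s + g (-s) - (g 0 + g 0) := by
    simp [two_mul]
  rw [secondDiffQuot, abs_div, abs_of_pos hsq, div_le_iff₀ hsq, hnum]
  linarith

variable {w : V → ℝ} {p e : V}

lemma tendsto_secondDiffQuot {D : ℝ → ℝ} {L : ℝ}
    (hw : ∀ᶠ t in 𝓝 (0 : ℝ), HasDerivAt (fun t : ℝ ↦ w (p + t • e)) (D t) t)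
    (hD : HasDerivAt D L 0) : Tendsto (secondDiffQuot w p e) (𝓝[>] 0) (𝓝 L) :=
  (tendsto_secondDiffQuot_real hw hD).congr (secondDiffQuot_line w p e)

lemma abs_secondDiffQuot_le {D D₂ : ℝ → ℝ} {s C : ℝ} (hs : 0 < s)
    (hw : ∀ t, |t| ≤ s → HasDerivAt (fun t : ℝ ↦ w (p + t • e)) (D t) t)
    (hD : ∀ t, |t| ≤ s → HasDerivAt D (D₂ t) t) (hC : ∀ t, |t| ≤ s → |D₂ t| ≤ C) :
    |secondDiffQuot w p e s| ≤ 2 * C := by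
  rw [← secondDiffQuot_line]
  exact abs_secondDiffQuot_real_le hs hw hD hC

end SecondDifferences

section GenLaplacian

variable {ι V : Type*} [Fintype ι] [AddCommGroup V] [Module ℝ V]
  {b : ι → V} {w w₁ w₂ : V → ℝ} {p : V} {L L₁ L₂ : ℝ}

/-- The discrete Laplacian of `w` at `p` with step `s`, along the finite family of directions
`b`. -/
def discreteLap (b : ι → V) (w : V → ℝ) (p : V) (s : ℝ) : ℝ :=
  ∑ i, secondDiffQuot w p (b i) s

/-- `w` has generalized Laplacian `L` at `p`: its discrete Laplacians along the directions `b`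
converge to `L` as the step tends to `0⁺`. Differentiability of `w` is not required. -/
def HasGenLap (b : ι → V) (w : V → ℝ) (p : V) (L : ℝ) : Prop :=
  Tendsto (discreteLap b w p) (𝓝[>] 0) (𝓝 L)

lemma HasGenLap.add (h₁ : HasGenLap b w₁ p L₁) (h₂ : HasGenLap b w₂ p L₂) :
    HasGenLap b (fun q ↦ w₁ q + w₂ q) p (L₁ + L₂) := by
  refine (Tendsto.add h₁ h₂).congr fun s ↦ ?_
  simp only [discreteLap, secondDiffQuot, ← Finset.sum_add_distrib]
  congr! 1
  ring

lemma HasGenLap.const_mul (c : ℝ) (h : HasGenLap b w p L) :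
    HasGenLap b (fun q ↦ c * w q) p (c * L) := by
  refine (Tendsto.const_mul c h).congr fun s ↦ ?_
  simp only [discreteLap, secondDiffQuot, Finset.mul_sum]
  congr! 1
  ring

lemma HasGenLap.neg (h : HasGenLap b w p L) : HasGenLap b (fun q ↦ -w q) p (-L) := by
  simpa using h.const_mul (-1)

lemma HasGenLap.sub (h₁ : HasGenLap b w₁ p L₁) (h₂ : HasGenLap b w₂ p L₂) :
    HasGenLap b (fun q ↦ w₁ q - w₂ q) p (L₁ - L₂) := by
  simpa only [sub_eq_add_neg] using h₁.add h₂.neg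

lemma discreteLap_comp_add_right (c : V) (s : ℝ) :
    discreteLap b (fun q ↦ w (q + c)) p s = discreteLap b w (p + c) s := by
  simp only [discreteLap, secondDiffQuot, add_right_comm, sub_add_eq_add_sub]

lemma HasGenLap.comp_add_right {c : V} (h : HasGenLap b w (p + c) L) :
    HasGenLap b (fun q ↦ w (q + c)) p L :=
  Tendsto.congr (fun s ↦ (discreteLap_comp_add_right c s).symm) h

lemma hasGenLap_of_hasDerivAt {D : ι → ℝ → ℝ} {D₂ : ι → ℝ}
    (hw : ∀ i, ∀ᶠ t in 𝓝 (0 : ℝ), HasDerivAt (fun t : ℝ ↦ w (p + t • b i)) (D i t) t)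
    (hD : ∀ i, HasDerivAt (D i) (D₂ i) 0) : HasGenLap b w p (∑ i, D₂ i) :=
  tendsto_finsetSum _ fun i _ ↦ tendsto_secondDiffQuot (hw i) (hD i)

variable [TopologicalSpace V] [IsTopologicalAddGroup V] [ContinuousSMul ℝ V]

lemma eventually_add_smul_and_sub_smul {P : V → Prop} (h : ∀ᶠ q in 𝓝 p, P q) (e : V) :
    ∀ᶠ s in 𝓝[>] (0 : ℝ), P (p + s • e) ∧ P (p - s • e) := by
  refine nhdsWithin_le_nhds ?_
  have hadd : ContinuousAt (fun s : ℝ ↦ p + s • e) 0 := by fun_prop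
  have hsub : ContinuousAt (fun s : ℝ ↦ p - s • e) 0 := by fun_prop
  exact (hadd.eventually (by simpa using h)).and (hsub.eventually (by simpa using h))

lemma HasGenLap.congr_of_eventuallyEq (h : HasGenLap b w₁ p L) (hw : w₁ =ᶠ[𝓝 p] w₂) :
    HasGenLap b w₂ p L := by
  refine Tendsto.congr' ?_ h
  filter_upwards [eventually_all.2 fun i ↦ eventually_add_smul_and_sub_smul hw (b i)] with s hs
  simp only [discreteLap, secondDiffQuot, hw.self_of_nhds, (hs _).1, (hs _).2]

lemma HasGenLap.nonpos_of_isLocalMax (h : HasGenLap b w p L) (hmax : IsLocalMax w p) : L ≤ 0 := by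
  refine le_of_tendsto h ?_
  filter_upwards [eventually_all.2 fun i ↦ eventually_add_smul_and_sub_smul hmax (b i)] with s hs
  exact Finset.sum_nonpos fun i _ ↦
    div_nonpos_of_nonpos_of_nonneg (by linarith [(hs i).1, (hs i).2]) (sq_nonneg s)

theorem nonpos_of_hasGenLap_pos {K : Set V} (hK : IsCompact K) (hw : ContinuousOn w K)
    (h : ∀ p ∈ K, w p ≤ 0 ∨ K ∈ 𝓝 p ∧ ∃ L > 0, HasGenLap b w p L) : ∀ p ∈ K, w p ≤ 0 := by
  intro p hp
  obtain ⟨p₀, hp₀, hmax⟩ := hK.exists_isMaxOn ⟨p, hp⟩ hw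
  refine (hmax hp).trans ?_
  rcases h p₀ hp₀ with hle | ⟨hK₀, L, hL, hlap⟩
  · exact hle
  · exact absurd (hlap.nonpos_of_isLocalMax (hmax.isLocalMax hK₀)) hL.not_ge

end GenLaplacian

/-! ### The Laplacian of `C²` functions -/

section EuclideanLaplacian

variable {d : ℕ} {g u : Ed d × ℝ → ℝ} {p : Ed d × ℝ}

/-- The coordinate directions of `ℝ^d × ℝ`; `none` is the vertical one. -/
def axes (d : ℕ) : Option (Fin d) → Ed d × ℝ
  | none => (0, 1)
  | some i => (EuclideanSpace.single i 1, 0)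

lemma lapE_eq_sum_axes (u : Ed d × ℝ → ℝ) (p : Ed d × ℝ) :
    lapE u p = ∑ j, pd2 u p (axes d j) := by
  simp [lapE, axes, Fintype.sum_option, add_comm]

lemma sum_inner_smul_axes (v : Ed d) : ∑ j, ⟪v, (axes d j).1⟫ • axes d j = (v, 0) := by
  refine Prod.ext ?_ (by simp [axes, Fintype.sum_option, Prod.snd_sum])
  ext i
  simp [axes, Fintype.sum_option, Prod.fst_sum, Finset.sum_apply, Pi.single_apply,
    EuclideanSpace.inner_single_right]

lemma hasDerivAt_add_smul {V : Type*} [NormedAddCommGroup V] [NormedSpace ℝ V] (p e : V) (t : ℝ) :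
    HasDerivAt (fun t : ℝ ↦ p + t • e) e t := by
  simpa using ((hasDerivAt_id t).smul_const e).const_add p

lemma contDiffAt_fderiv_apply {m n : WithTop ℕ∞} (hu : ContDiffAt ℝ n u p) (hmn : m + 1 ≤ n)
    (e : Ed d × ℝ) : ContDiffAt ℝ m (fun q ↦ fderiv ℝ u q e) p :=
  (hu.fderiv_right hmn).clm_apply contDiffAt_const

lemma differentiableAt_fderiv_apply (hu : ContDiffAt ℝ 2 u p) (e : Ed d × ℝ) :
    DifferentiableAt ℝ (fun q ↦ fderiv ℝ u q e) p :=
  (contDiffAt_fderiv_apply hu one_add_one_eq_two.le e).differentiableAt one_ne_zero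

lemma continuousAt_lapE (hu : ContDiffAt ℝ 2 u p) : ContinuousAt (lapE u) p := by
  have hpd2 : ∀ e, ContinuousAt (fun q ↦ pd2 u q e) p := fun e ↦
    (contDiffAt_fderiv_apply (contDiffAt_fderiv_apply hu one_add_one_eq_two.le e)
      (zero_add 1).le e).continuousAt
  rw [funext (lapE_eq_sum_axes u)]
  exact tendsto_finsetSum _ fun j _ ↦ hpd2 (axes d j)

lemma hasGenLap_of_contDiffAt (hu : ContDiffAt ℝ 2 u p) : HasGenLap (axes d) u p (lapE u p) := by
  have hline : ∀ e, ContinuousAt (fun t : ℝ ↦ p + t • e) 0 := fun e ↦ by fun_prop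
  have hdiff : ∀ᶠ q in 𝓝 p, DifferentiableAt ℝ u q :=
    (hu.eventually (by simp)).mono fun q hq ↦ hq.differentiableAt (by simp)
  rw [lapE_eq_sum_axes]
  refine hasGenLap_of_hasDerivAt (D := fun j t ↦ fderiv ℝ u (p + t • axes d j) (axes d j))
    (fun j ↦ ?_) fun j ↦ ?_
  · filter_upwards [(hline (axes d j)).eventually (by simpa using hdiff)] with t ht
    exact ht.hasFDerivAt.comp_hasDerivAt t (hasDerivAt_add_smul p _ t)
  · exact HasFDerivAt.comp_hasDerivAt (f := fun t : ℝ ↦ p + t • axes d j) 0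
      (by simpa using (differentiableAt_fderiv_apply hu (axes d j)).hasFDerivAt)
      (hasDerivAt_add_smul p _ 0)

lemma pd2_mul (hg : ContDiffAt ℝ 2 g p) (hu : ContDiffAt ℝ 2 u p) (e : Ed d × ℝ) :
    pd2 (fun q ↦ g q * u q) p e =
      g p * pd2 u p e + 2 * (fderiv ℝ g p e * fderiv ℝ u p e) + u p * pd2 g p e := by
  have hfirst : (fun q ↦ fderiv ℝ (fun q ↦ g q * u q) q e) =ᶠ[𝓝 p]
      fun q ↦ g q * fderiv ℝ u q e + u q * fderiv ℝ g q e := by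
    filter_upwards [hg.eventually (by simp), hu.eventually (by simp)] with q hgq huq
    rw [fderiv_fun_mul (hgq.differentiableAt (by simp)) (huq.differentiableAt (by simp))]
    simp
  have hdg := hg.differentiableAt (by simp)
  have hdu := hu.differentiableAt (by simp)
  have hd'g := differentiableAt_fderiv_apply hg e
  have hd'u := differentiableAt_fderiv_apply hu e
  rw [pd2, hfirst.fderiv_eq, fderiv_fun_add (hdg.fun_mul hd'u) (hdu.fun_mul hd'g),
    fderiv_fun_mul hdg hd'u, fderiv_fun_mul hdu hd'g]
  simp only [add_apply, smul_apply, smul_eq_mul, pd2]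
  ring

lemma lapE_mul (hg : ContDiffAt ℝ 2 g p) (hu : ContDiffAt ℝ 2 u p) :
    lapE (fun q ↦ g q * u q) p = g p * lapE u p +
      2 * ∑ j, fderiv ℝ g p (axes d j) * fderiv ℝ u p (axes d j) + u p * lapE g p := by
  simp only [lapE_eq_sum_axes, pd2_mul hg hu, Finset.sum_add_distrib, Finset.mul_sum]

end EuclideanLaplacian

/-! ### The Poisson kernel of the half-space -/

section PoissonKernel

variable {d : ℕ}

/-- The Euclidean inner product of `ℝ^d × ℝ`, whose Mathlib norm is the sup norm. -/
def dot (q e : Ed d × ℝ) : ℝ := ⟪q.1, e.1⟫ + q.2 * e.2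

/-- The squared Euclidean length of a vector of `ℝ^d × ℝ`. -/
def sqLen (q : Ed d × ℝ) : ℝ := ‖q.1‖ ^ 2 + q.2 ^ 2

lemma dot_sq_le (q e : Ed d × ℝ) : dot q e ^ 2 ≤ sqLen q * sqLen e := by
  have h := real_inner_mul_inner_self_le (WithLp.toLp 2 q) (WithLp.toLp 2 e)
  simp only [WithLp.prod_inner_apply, real_inner_self_eq_norm_sq] at h
  calc dot q e ^ 2 ≤ _ := by simpa [dot, sq, mul_comm] using h
    _ = sqLen q * sqLen e := by simp [sqLen, sq]

lemma snd_sq_le_sqLen (q : Ed d × ℝ) : q.2 ^ 2 ≤ sqLen q :=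
  le_add_of_nonneg_left (sq_nonneg _)

lemma sqLen_pos {q : Ed d × ℝ} (hq : 0 < q.2) : 0 < sqLen q :=
  (pow_pos hq 2).trans_le (snd_sq_le_sqLen q)

lemma continuous_sqLen : Continuous (sqLen : Ed d × ℝ → ℝ) := by
  unfold sqLen; fun_prop

lemma sqLen_axes (j : Option (Fin d)) : sqLen (axes d j) = 1 := by
  cases j <;> simp [sqLen, axes]

lemma sum_dot_axes_sq (q : Ed d × ℝ) : ∑ j, dot q (axes d j) ^ 2 = sqLen q := by
  simp [dot, sqLen, axes, Fintype.sum_option, EuclideanSpace.norm_sq_eq,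
    EuclideanSpace.inner_single_right, add_comm]

lemma sum_axes_snd_mul_dot (q : Ed d × ℝ) : ∑ j, (axes d j).2 * dot q (axes d j) = q.2 := by
  simp [dot, axes, Fintype.sum_option]

/-- The exponent `(d + 1) / 2` of the Poisson kernel. -/
def poissonExponent (d : ℕ) : ℝ := (d + 1) / 2

lemma poissonExponent_pos (d : ℕ) : 0 < poissonExponent d := by
  unfold poissonExponent; positivity

/-- The (unnormalized) Poisson kernel `y (|x|² + y²)^{-(d+1)/2}` of `ℝ^{d+1}₊`. -/
def halfSpaceKernel (q : Ed d × ℝ) : ℝ := q.2 * sqLen q ^ (-poissonExponent d)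

/-- The derivative of the Poisson kernel at `q` in direction `e`. -/
def halfSpaceKernelDeriv (e q : Ed d × ℝ) : ℝ :=
  e.2 * sqLen q ^ (-poissonExponent d) -
    2 * poissonExponent d * (q.2 * dot q e) * sqLen q ^ (-poissonExponent d - 1)

/-- The second derivative of the Poisson kernel at `q` in direction `e`. -/
def halfSpaceKernelDeriv₂ (e q : Ed d × ℝ) : ℝ :=
  -(4 * poissonExponent d * (e.2 * dot q e) + 2 * poissonExponent d * q.2 * sqLen e) *
      sqLen q ^ (-poissonExponent d - 1) +
    4 * poissonExponent d * (poissonExponent d + 1) *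
      (q.2 * dot q e ^ 2 * sqLen q ^ (-poissonExponent d - 2))

section Lines

variable (q e : Ed d × ℝ) (t : ℝ)

lemma hasDerivAt_snd_line : HasDerivAt (fun t : ℝ ↦ (q + t • e).2) e.2 t := by
  simpa using ((hasDerivAt_id t).mul_const e.2).const_add q.2

lemma hasDerivAt_fst_line : HasDerivAt (fun t : ℝ ↦ (q + t • e).1) e.1 t :=
  hasDerivAt_add_smul q.1 e.1 t

lemma hasDerivAt_dot_line : HasDerivAt (fun t : ℝ ↦ dot (q + t • e) e) (sqLen e) t := by
  refine (((hasDerivAt_fst_line q e t).inner ℝ (hasDerivAt_const t e.1)).add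
    ((hasDerivAt_snd_line q e t).mul_const e.2)).congr_deriv ?_
  simp only [sqLen, inner_zero_right, real_inner_self_eq_norm_sq]
  ring

lemma hasDerivAt_sqLen_line :
    HasDerivAt (fun t : ℝ ↦ sqLen (q + t • e)) (2 * dot (q + t • e) e) t := by
  refine ((hasDerivAt_fst_line q e t).norm_sq.add
    ((hasDerivAt_snd_line q e t).fun_pow 2)).congr_deriv ?_
  simp only [dot, Nat.cast_ofNat, Nat.add_one_sub_one, pow_one]
  ring

variable {q e t}

lemma hasDerivAt_halfSpaceKernel_line (h : 0 < sqLen (q + t • e)) :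
    HasDerivAt (fun t : ℝ ↦ halfSpaceKernel (q + t • e))
      (halfSpaceKernelDeriv e (q + t • e)) t := by
  have hpow := (hasDerivAt_sqLen_line q e t).rpow_const (p := -poissonExponent d) (.inl h.ne')
  refine ((hasDerivAt_snd_line q e t).mul hpow).congr_deriv ?_
  simp only [halfSpaceKernelDeriv]
  ring

lemma hasDerivAt_halfSpaceKernelDeriv_line (h : 0 < sqLen (q + t • e)) :
    HasDerivAt (fun t : ℝ ↦ halfSpaceKernelDeriv e (q + t • e))
      (halfSpaceKernelDeriv₂ e (q + t • e)) t := by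
  have hpow (a : ℝ) := (hasDerivAt_sqLen_line q e t).rpow_const (p := a) (.inl h.ne')
  have hprod := (hasDerivAt_snd_line q e t).fun_mul (hasDerivAt_dot_line q e t)
  refine (((hpow (-poissonExponent d)).const_mul e.2).sub
    ((hprod.const_mul (2 * poissonExponent d)).mul (hpow _))).congr_deriv ?_
  rw [halfSpaceKernelDeriv₂, show -poissonExponent d - 1 - 1 = -poissonExponent d - 2 by ring]
  ring

end Lines

lemma sum_halfSpaceKernelDeriv₂_axes {q : Ed d × ℝ} (hq : 0 < sqLen q) :
    ∑ j, halfSpaceKernelDeriv₂ (axes d j) q = 0 := by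
  have hpow : sqLen q ^ (-poissonExponent d - 1) =
      sqLen q * sqLen q ^ (-poissonExponent d - 2) := by
    rw [show -poissonExponent d - 1 = 1 + (-poissonExponent d - 2) by ring, Real.rpow_add hq,
      Real.rpow_one]
  simp only [halfSpaceKernelDeriv₂, sqLen_axes, Finset.sum_add_distrib, ← Finset.sum_mul,
    ← Finset.mul_sum, Finset.sum_neg_distrib, sum_dot_axes_sq, sum_axes_snd_mul_dot, hpow]
  simp only [Finset.sum_const, Finset.card_univ, Fintype.card_option, Fintype.card_fin,
    nsmul_eq_mul, poissonExponent]
  push_cast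
  ring

lemma hasGenLap_halfSpaceKernel {q : Ed d × ℝ} (hq : 0 < q.2) :
    HasGenLap (axes d) halfSpaceKernel q 0 := by
  have hpos : ∀ j, ∀ᶠ t in 𝓝 (0 : ℝ), 0 < sqLen (q + t • axes d j) := fun j ↦
    have hcont : ContinuousAt (fun t : ℝ ↦ sqLen (q + t • axes d j)) 0 :=
      (continuous_sqLen.comp (by fun_prop)).continuousAt
    hcont.eventually (lt_mem_nhds (by simpa using sqLen_pos hq))
  have h := hasGenLap_of_hasDerivAt
    (fun j ↦ (hpos j).mono fun _ ↦ hasDerivAt_halfSpaceKernel_line)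
    fun j ↦ hasDerivAt_halfSpaceKernelDeriv_line (by simpa using sqLen_pos hq)
  simpa [sum_halfSpaceKernelDeriv₂_axes (sqLen_pos hq)] using h

/-- The factors `q.2` and `dot q e` produced by differentiation are at most the square root of
`sqLen q`, so that each differentiation gains half a power. -/
lemma abs_halfSpaceKernelDeriv₂_le {e q : Ed d × ℝ} (he : sqLen e = 1) (hq : 0 < sqLen q) :
    |halfSpaceKernelDeriv₂ e q| ≤
      (6 * poissonExponent d + 4 * poissonExponent d * (poissonExponent d + 1)) *
        sqLen q ^ (-poissonExponent d - 1 / 2) := by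
  have hN := poissonExponent_pos d
  have hdot : dot q e ^ 2 ≤ sqLen q := by simpa [he] using dot_sq_le q e
  unfold halfSpaceKernelDeriv₂
  set N := poissonExponent d
  set ρ := sqLen q
  have hY : |q.2| ≤ √ρ := Real.abs_le_sqrt (snd_sq_le_sqLen q)
  have hZ : |dot q e| ≤ √ρ := Real.abs_le_sqrt hdot
  have hη : |e.2| ≤ 1 := by simpa [he] using Real.abs_le_sqrt (snd_sq_le_sqLen e)
  have hpow₁ : √ρ * ρ ^ (-N - 1) = ρ ^ (-N - 1 / 2) := by
    rw [Real.sqrt_eq_rpow, ← Real.rpow_add hq]; ring_nf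
  have hpow₂ : ρ * ρ ^ (-N - 2) = ρ ^ (-N - 1) := by
    rw [← Real.rpow_one_add' hq.le (by linarith)]; ring_nf
  have hfirst : |-(4 * N * (e.2 * dot q e) + 2 * N * q.2 * sqLen e) * ρ ^ (-N - 1)| ≤
      6 * N * (√ρ * ρ ^ (-N - 1)) := by
    rw [← mul_assoc (6 * N), abs_mul, abs_neg, abs_of_pos (Real.rpow_pos_of_pos hq _)]
    refine mul_le_mul_of_nonneg_right ?_ (Real.rpow_nonneg hq.le _)
    calc |4 * N * (e.2 * dot q e) + 2 * N * q.2 * sqLen e|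
        ≤ 4 * N * (|e.2| * |dot q e|) + 2 * N * |q.2| := by
          refine (abs_add_le _ _).trans_eq ?_
          simp [abs_mul, abs_of_pos hN, he]
      _ ≤ 4 * N * (1 * √ρ) + 2 * N * √ρ := by gcongr
      _ = 6 * N * √ρ := by ring
  have hsecond : |4 * N * (N + 1) * (q.2 * dot q e ^ 2 * ρ ^ (-N - 2))| ≤
      4 * N * (N + 1) * (√ρ * ρ * ρ ^ (-N - 2)) := by
    rw [abs_mul, abs_of_pos (show 0 < 4 * N * (N + 1) by positivity), abs_mul, abs_mul,
      abs_of_pos (Real.rpow_pos_of_pos hq _), abs_of_nonneg (sq_nonneg (dot q e))]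
    gcongr
  rw [mul_assoc √ρ ρ] at hsecond
  rw [hpow₂, hpow₁] at hsecond
  rw [hpow₁] at hfirst
  exact (abs_add_le _ _).trans (by linarith)

lemma exists_abs_discreteLap_halfSpaceKernel_le {y : ℝ} (hy : 0 < y) :
    ∃ C, ∀ (x : Ed d) (s : ℝ), 0 < s → s ≤ y / 2 →
      |discreteLap (axes d) halfSpaceKernel (x, y) s| ≤ C := by
  set N := poissonExponent d
  have hN : 0 < N := poissonExponent_pos d
  set B := (6 * N + 4 * N * (N + 1)) * ((y / 2) ^ 2) ^ (-N - 1 / 2)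
  refine ⟨∑ _j : Option (Fin d), 2 * B, fun x s hs hsy ↦
    (Finset.abs_sum_le_sum_abs _ _).trans (Finset.sum_le_sum fun j _ ↦ ?_)⟩
  have hlen : ∀ t : ℝ, |t| ≤ s → (y / 2) ^ 2 ≤ sqLen ((x, y) + t • axes d j) := by
    intro t ht
    refine (pow_le_pow_left₀ (by positivity) ?_ 2).trans (snd_sq_le_sqLen _)
    cases j <;> simp [axes] <;> linarith [(abs_le.1 ht).1]
  have hpos : 0 < (y / 2) ^ 2 := by positivity
  refine abs_secondDiffQuot_le hs
    (fun t ht ↦ hasDerivAt_halfSpaceKernel_line (hpos.trans_le (hlen t ht)))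
    (fun t ht ↦ hasDerivAt_halfSpaceKernelDeriv_line (hpos.trans_le (hlen t ht)))
    (fun t ht ↦ ?_)
  refine (abs_halfSpaceKernelDeriv₂_le (sqLen_axes j) (hpos.trans_le (hlen t ht))).trans ?_
  exact mul_le_mul_of_nonneg_left
    (Real.rpow_le_rpow_of_nonpos hpos (hlen t ht) (by linarith)) (by positivity)

lemma sq_rpow_neg_poissonExponent (d : ℕ) {r : ℝ} (hr : 0 ≤ r) :
    (r ^ 2) ^ (-poissonExponent d) = (r ^ (d + 1))⁻¹ := by
  rw [Real.rpow_neg (by positivity), ← Real.rpow_natCast r 2, ← Real.rpow_mul hr,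
    ← Real.rpow_natCast, poissonExponent]
  congr 2
  push_cast
  ring

lemma halfSpaceKernel_pos {q : Ed d × ℝ} (hq : 0 < q.2) : 0 < halfSpaceKernel q :=
  mul_pos hq (Real.rpow_pos_of_pos (sqLen_pos hq) _)

lemma continuousAt_halfSpaceKernel {q : Ed d × ℝ} (hq : 0 < q.2) :
    ContinuousAt halfSpaceKernel q :=
  continuousAt_snd.mul (continuous_sqLen.continuousAt.rpow_const (.inl (sqLen_pos hq).ne'))

lemma continuous_halfSpaceKernel_slice {y : ℝ} (hy : 0 < y) :
    Continuous fun t : Ed d ↦ halfSpaceKernel (t, y) :=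
  continuous_iff_continuousAt.2 fun t ↦
    (continuousAt_halfSpaceKernel hy).comp (f := fun t : Ed d ↦ (t, y)) (by fun_prop)

lemma halfSpaceKernel_le {q : Ed d × ℝ} {r : ℝ} (hr : 0 < r) (hq : 0 ≤ q.2)
    (h : r ^ 2 ≤ sqLen q) : halfSpaceKernel q ≤ q.2 * (r ^ (d + 1))⁻¹ := by
  rw [← sq_rpow_neg_poissonExponent d hr.le]
  exact mul_le_mul_of_nonneg_left (Real.rpow_le_rpow_of_nonpos (by positivity) h
    (neg_nonpos.2 (poissonExponent_pos d).le)) hq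

lemma halfSpaceKernel_le_inv_pow {q : Ed d × ℝ} {δ : ℝ} (hδ : 0 < δ) (hq : δ ≤ q.2) :
    halfSpaceKernel q ≤ (δ ^ d)⁻¹ := by
  have hq0 : 0 < q.2 := hδ.trans_le hq
  calc halfSpaceKernel q ≤ q.2 * (q.2 ^ (d + 1))⁻¹ :=
        halfSpaceKernel_le hq0 hq0.le (snd_sq_le_sqLen q)
    _ = (q.2 ^ d)⁻¹ := by field_simp; ring
    _ ≤ (δ ^ d)⁻¹ := by gcongr

lemma halfSpaceKernel_smul (x : Ed d) {y : ℝ} (hy : 0 < y) :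
    halfSpaceKernel (y • x, y) = (y ^ d)⁻¹ * halfSpaceKernel (x, 1) := by
  have hlen : sqLen (y • x, y) = y ^ 2 * sqLen (x, 1) := by
    simp only [sqLen, norm_smul, mul_pow, Real.norm_eq_abs, sq_abs]
    ring
  simp only [halfSpaceKernel, hlen]
  rw [Real.mul_rpow (by positivity) (sqLen_pos one_pos).le, sq_rpow_neg_poissonExponent d hy.le]
  field_simp
  ring

lemma integrable_halfSpaceKernel_one (d : ℕ) :
    Integrable fun t : Ed d ↦ halfSpaceKernel (t, 1) := by
  refine (integrable_rpow_neg_one_add_norm_sq (E := Ed d) (μ := volume) (r := d + 1)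
    (by simp)).congr (.of_forall fun t ↦ ?_)
  simp only [halfSpaceKernel, sqLen, poissonExponent, one_mul, one_pow, add_comm (‖t‖ ^ 2), neg_div]

/-- The total mass of the unnormalized Poisson kernel over a horizontal hyperplane. -/
def kernelMass (d : ℕ) : ℝ := ∫ t : Ed d, halfSpaceKernel (t, 1)

lemma setIntegral_halfSpaceKernel_one_pos {s : Set (Ed d)} (hs : volume s ≠ 0) :
    0 < ∫ t in s, halfSpaceKernel (t, 1) := by
  refine (setIntegral_pos_iff_support_of_nonneg_ae
    (.of_forall fun t ↦ (halfSpaceKernel_pos one_pos).le)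
    (integrable_halfSpaceKernel_one d).integrableOn).2 ?_
  have hsupp : Function.support (fun t : Ed d ↦ halfSpaceKernel (t, 1)) = Set.univ :=
    Set.eq_univ_of_forall fun t ↦ (halfSpaceKernel_pos one_pos).ne'
  rw [hsupp, Set.univ_inter]
  exact hs.bot_lt

lemma kernelMass_pos (d : ℕ) : 0 < kernelMass d := by
  simpa [kernelMass] using
    setIntegral_halfSpaceKernel_one_pos (s := (Set.univ : Set (Ed d))) (NeZero.ne _)

end PoissonKernel

/-! ### Poisson integrals -/

section IntegralLaplacian

variable {ι V X : Type*} [Fintype ι] [AddCommGroup V] [Module ℝ V] [MeasurableSpace X]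
  {μ : Measure X} {b : ι → V} {F : V → X → ℝ} {p : V}

lemma discreteLap_integral {s : ℝ} (hp : Integrable (F p) μ)
    (hs : ∀ i, Integrable (F (p + s • b i)) μ ∧ Integrable (F (p - s • b i)) μ) :
    Integrable (fun t ↦ discreteLap b (fun q ↦ F q t) p s) μ ∧
      ∫ t, discreteLap b (fun q ↦ F q t) p s ∂μ = discreteLap b (fun q ↦ ∫ t, F q t ∂μ) p s := by
  have hadd i : Integrable (fun t ↦ F (p + s • b i) t + F (p - s • b i) t) μ :=
    (hs i).1.add (hs i).2
  have hterm i : Integrable (fun t ↦ secondDiffQuot (fun q ↦ F q t) p (b i) s) μ :=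
    ((hadd i).sub (hp.const_mul 2)).div_const _
  refine ⟨integrable_finsetSum _ fun i _ ↦ hterm i, ?_⟩
  simp only [discreteLap]
  rw [integral_finsetSum _ fun i _ ↦ hterm i]
  congr! 1 with i
  simp only [secondDiffQuot]
  rw [integral_div, integral_sub (hadd i) (hp.const_mul 2), integral_add (hs i).1 (hs i).2,
    integral_const_mul]

variable [TopologicalSpace V] [IsTopologicalAddGroup V] [ContinuousSMul ℝ V]

lemma hasGenLap_integral {L bound : X → ℝ} (hF : ∀ᶠ q in 𝓝 p, Integrable (F q) μ)
    (hbound : ∀ᶠ s in 𝓝[>] 0, ∀ᵐ t ∂μ, |discreteLap b (fun q ↦ F q t) p s| ≤ bound t)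
    (hbound_int : Integrable bound μ) (hL : ∀ᵐ t ∂μ, HasGenLap b (fun q ↦ F q t) p (L t)) :
    HasGenLap b (fun q ↦ ∫ t, F q t ∂μ) p (∫ t, L t ∂μ) := by
  have hint : ∀ᶠ s in 𝓝[>] (0 : ℝ),
      Integrable (fun t ↦ discreteLap b (fun q ↦ F q t) p s) μ ∧
        ∫ t, discreteLap b (fun q ↦ F q t) p s ∂μ = discreteLap b (fun q ↦ ∫ t, F q t ∂μ) p s :=
    (eventually_all.2 fun i ↦ eventually_add_smul_and_sub_smul hF (b i)).mono fun s hs ↦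
      discreteLap_integral hF.self_of_nhds hs
  exact (tendsto_integral_filter_of_dominated_convergence bound
    (hint.mono fun s hs ↦ hs.1.aestronglyMeasurable) hbound hbound_int hL).congr'
    (hint.mono fun s hs ↦ hs.2)

end IntegralLaplacian

section PoissonExtension

variable {d : ℕ} {f : Ed d → ℝ} {q : Ed d × ℝ}

/-- The Poisson extension `∫ P_y(x - t) f(t) dt` of `f`, written after the substitution
`t = x - y s` so that it also makes sense for `y = 0`, where it equals `f`. -/
def poissonExt (f : Ed d → ℝ) (q : Ed d × ℝ) : ℝ :=
  (kernelMass d)⁻¹ * ∫ s, halfSpaceKernel (s, 1) * f (q.1 - q.2 • s)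

lemma poissonExt_const (c : ℝ) (q : Ed d × ℝ) : poissonExt (fun _ ↦ c) q = c := by
  rw [poissonExt, integral_mul_const, ← kernelMass, inv_mul_cancel_left₀ (kernelMass_pos d).ne']

lemma poissonExt_zero (f : Ed d → ℝ) (x : Ed d) : poissonExt f (x, 0) = f x := by
  simpa [poissonExt] using poissonExt_const (f x) (x, (0 : ℝ))

lemma poissonExt_neg (f : Ed d → ℝ) (q : Ed d × ℝ) :
    poissonExt (fun x ↦ -f x) q = -poissonExt f q := by
  simp only [poissonExt, mul_neg, integral_neg]

lemma poissonExt_nonneg (hf : ∀ t, 0 ≤ f t) (q : Ed d × ℝ) : 0 ≤ poissonExt f q :=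
  mul_nonneg (inv_nonneg.2 (kernelMass_pos d).le) <| integral_nonneg fun _ ↦
    mul_nonneg (halfSpaceKernel_pos one_pos).le (hf _)

lemma norm_halfSpaceKernel_mul_le {M : ℝ} (hf : ∀ t, |f t| ≤ M) (q : Ed d × ℝ) (s : Ed d) :
    ‖halfSpaceKernel (s, 1) * f (q.1 - q.2 • s)‖ ≤ halfSpaceKernel (s, 1) * M := by
  rw [Real.norm_eq_abs, abs_mul, abs_of_pos (halfSpaceKernel_pos one_pos)]
  exact mul_le_mul_of_nonneg_left (hf _) (halfSpaceKernel_pos one_pos).le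

lemma abs_poissonExt_le {M : ℝ} (hf : ∀ t, |f t| ≤ M) (q : Ed d × ℝ) : |poissonExt f q| ≤ M := by
  rw [← poissonExt_const M q, poissonExt, poissonExt, abs_mul,
    abs_of_pos (inv_pos.2 (kernelMass_pos d))]
  exact mul_le_mul_of_nonneg_left
    (norm_integral_le_of_norm_le ((integrable_halfSpaceKernel_one d).mul_const M)
      (.of_forall (norm_halfSpaceKernel_mul_le hf q))) (inv_pos.2 (kernelMass_pos d)).le

lemma continuous_poissonExt {M : ℝ} (hfc : Continuous f) (hf : ∀ t, |f t| ≤ M) :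
    Continuous (poissonExt f) := by
  have hK : Continuous fun s : Ed d ↦ halfSpaceKernel (s, 1) :=
    continuous_halfSpaceKernel_slice one_pos
  refine continuous_const.mul (continuous_of_dominated (fun q ↦ ?_)
    (fun q ↦ .of_forall (norm_halfSpaceKernel_mul_le hf q))
    ((integrable_halfSpaceKernel_one d).mul_const M) (.of_forall fun s ↦ by fun_prop))
  exact Continuous.aestronglyMeasurable (by fun_prop)

lemma poissonExt_of_pos (f : Ed d → ℝ) (hq : 0 < q.2) :
    poissonExt f q = (kernelMass d)⁻¹ * ∫ t, halfSpaceKernel (q.1 - t, q.2) * f t := by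
  obtain ⟨x, y⟩ := q
  have hscale : ∀ s, halfSpaceKernel (s, 1) * f (x - y • s) =
      y ^ d * (halfSpaceKernel (y • s, y) * f (x - y • s)) := by
    intro s
    rw [halfSpaceKernel_smul s hq]
    field_simp
  have hsmul := Measure.integral_comp_smul volume
    (fun z : Ed d ↦ y ^ d * (halfSpaceKernel (z, y) * f (x - z))) y
  have hsub := integral_sub_left_eq_self (fun z ↦ halfSpaceKernel (z, y) * f (x - z)) volume x
  simp only [poissonExt, hscale, hsmul, integral_const_mul, ← hsub, sub_sub_cancel,
    finrank_euclideanSpace, Fintype.card_fin, smul_eq_mul, abs_inv, abs_pow, abs_of_pos hq]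
  rw [inv_mul_cancel_left₀ (by positivity)]

lemma integrable_halfSpaceKernel_mul (hf : Integrable f) (hq : 0 < q.2) :
    Integrable fun t ↦ halfSpaceKernel (q.1 - t, q.2) * f t := by
  refine hf.bdd_mul (c := (q.2 ^ d)⁻¹) ((continuous_halfSpaceKernel_slice hq).comp
    (continuous_const.sub continuous_id)).aestronglyMeasurable (.of_forall fun t ↦ ?_)
  rw [Real.norm_eq_abs, abs_of_pos (halfSpaceKernel_pos (q := (q.1 - t, q.2)) hq)]
  exact halfSpaceKernel_le_inv_pow hq le_rfl

lemma poissonExt_eventuallyEq (f : Ed d → ℝ) (hq : 0 < q.2) :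
    (fun q : Ed d × ℝ ↦ (kernelMass d)⁻¹ * ∫ t, halfSpaceKernel (q.1 - t, q.2) * f t)
      =ᶠ[𝓝 q] poissonExt f :=
  (continuousAt_snd.eventually (lt_mem_nhds hq)).mono fun _ hp ↦ (poissonExt_of_pos f hp).symm

lemma continuousAt_poissonExt (hf : Integrable f) (hq : 0 < q.2) :
    ContinuousAt (poissonExt f) q := by
  have hev : ∀ᶠ p : Ed d × ℝ in 𝓝 q, q.2 / 2 < p.2 :=
    continuousAt_snd.eventually (lt_mem_nhds (half_lt_self hq))
  refine ContinuousAt.congr (continuousAt_const.mul (continuousAt_of_dominated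
    (bound := fun t ↦ ((q.2 / 2) ^ d)⁻¹ * ‖f t‖) ?_ ?_ (hf.norm.const_mul _)
    (.of_forall fun t ↦ ?_))) (poissonExt_eventuallyEq f hq)
  · filter_upwards [hev] with p hp
    exact (integrable_halfSpaceKernel_mul hf ((half_pos hq).trans hp)).aestronglyMeasurable
  · filter_upwards [hev] with p hp
    refine .of_forall fun t ↦ ?_
    have hpos := halfSpaceKernel_pos (q := (p.1 - t, p.2)) ((half_pos hq).trans hp)
    rw [norm_mul, Real.norm_eq_abs, abs_of_pos hpos]
    exact mul_le_mul_of_nonneg_right (halfSpaceKernel_le_inv_pow (half_pos hq) hp.le)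
      (norm_nonneg _)
  · exact ((continuousAt_halfSpaceKernel (q := (q.1 - t, q.2)) hq).comp
      (f := fun p : Ed d × ℝ ↦ (p.1 - t, p.2)) (by fun_prop)).mul continuousAt_const

lemma hasGenLap_poissonExt (hf : Integrable f) (hq : 0 < q.2) :
    HasGenLap (axes d) (poissonExt f) q 0 := by
  have htranslate (t : Ed d) (p : Ed d × ℝ) : (p.1 - t, p.2) = p + (-t, 0) := by
    ext1 <;> simp [sub_eq_add_neg]
  have hlap (t : Ed d) (s : ℝ) :
      discreteLap (axes d) (fun p ↦ halfSpaceKernel (p.1 - t, p.2) * f t) q s =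
        discreteLap (axes d) halfSpaceKernel (q.1 - t, q.2) s * f t := by
    simp only [htranslate, ← discreteLap_comp_add_right]
    simp only [discreteLap, secondDiffQuot, Finset.sum_mul]
    congr! 1
    ring
  obtain ⟨C, hC⟩ := exists_abs_discreteLap_halfSpaceKernel_le (d := d) hq
  have hmain : HasGenLap (axes d) (fun p ↦ ∫ t, halfSpaceKernel (p.1 - t, p.2) * f t) q
      (∫ t, 0 * f t) := by
    refine hasGenLap_integral (bound := fun t ↦ C * ‖f t‖) ?_ ?_ (hf.norm.const_mul C)
      (.of_forall fun t ↦ ?_)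
    · exact (continuousAt_snd.eventually (lt_mem_nhds hq)).mono fun p ↦
        integrable_halfSpaceKernel_mul hf
    · filter_upwards [self_mem_nhdsWithin, nhdsWithin_le_nhds (Iic_mem_nhds (half_pos hq))]
        with s hs hsq
      refine .of_forall fun t ↦ ?_
      rw [hlap, abs_mul]
      exact mul_le_mul_of_nonneg_right (hC _ s hs hsq) (abs_nonneg _)
    · exact ((hasGenLap_halfSpaceKernel (q := (q.1 - t, q.2)) hq).mul_const (f t)).congr
        fun s ↦ (hlap t s).symm
  have h := (hmain.const_mul (kernelMass d)⁻¹).congr_of_eventuallyEq (poissonExt_eventuallyEq f hq)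
  simpa using h

lemma exists_forall_le_poissonExt (d : ℕ) {b : ℝ} (hb : 0 < b) :
    ∃ c > 0, ∀ f : Ed d → ℝ, Integrable f → (∀ t, 0 ≤ f t) → ∀ q : Ed d × ℝ, 0 < q.2 →
      (∀ t ∈ ball q.1 (b * q.2), 1 ≤ f t) → c ≤ poissonExt f q := by
  refine ⟨(kernelMass d)⁻¹ * ∫ s in ball (0 : Ed d) b, halfSpaceKernel (s, 1),
    mul_pos (inv_pos.2 (kernelMass_pos d))
      (setIntegral_halfSpaceKernel_one_pos (measure_ball_pos _ _ hb).ne'),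
    fun f hf hf0 q hq h1 ↦
      mul_le_mul_of_nonneg_left ?_ (inv_pos.2 (kernelMass_pos d)).le⟩
  have hint : Integrable fun s ↦ halfSpaceKernel (s, 1) * f (q.1 - q.2 • s) := by
    refine (((hf.comp_sub_left q.1).comp_smul hq.ne').bdd_mul (c := 1)
      (continuous_halfSpaceKernel_slice one_pos).aestronglyMeasurable (.of_forall fun t ↦ ?_))
    rw [Real.norm_eq_abs, abs_of_pos (halfSpaceKernel_pos one_pos)]
    simpa using halfSpaceKernel_le_inv_pow (q := (t, (1 : ℝ))) one_pos le_rfl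
  have hnonneg : ∀ s, 0 ≤ halfSpaceKernel (s, 1) * f (q.1 - q.2 • s) := fun s ↦
    mul_nonneg (halfSpaceKernel_pos one_pos).le (hf0 _)
  refine (setIntegral_mono_on (integrable_halfSpaceKernel_one d).integrableOn hint.integrableOn
    measurableSet_ball fun s hs ↦ ?_).trans (setIntegral_le_integral hint (.of_forall hnonneg))
  refine le_mul_of_one_le_right (halfSpaceKernel_pos one_pos).le (h1 _ ?_)
  rw [mem_ball_zero_iff] at hs
  rw [mem_ball, dist_eq_norm, sub_sub_cancel_left, norm_neg, norm_smul, Real.norm_eq_abs,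
    abs_of_pos hq, mul_comm]
  exact mul_lt_mul_of_pos_right hs hq

end PoissonExtension

/-! ### Fatou's theorem for Poisson integrals -/

lemma integral_le_tsum_integral {X : Type*} [MeasurableSpace X] {μ : Measure X} {g : X → ℝ}
    {G : ℕ → X → ℝ} (hg0 : ∀ x, 0 ≤ g x) (hg : Integrable g μ) (hG0 : ∀ k x, 0 ≤ G k x)
    (hG : ∀ k, Integrable (G k) μ) (hsum : Summable fun k ↦ ∫ x, G k x ∂μ)
    (hle : ∀ x, ∃ k, g x ≤ G k x) : ∫ x, g x ∂μ ≤ ∑' k, ∫ x, G k x ∂μ := by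
  have hG_int0 k : 0 ≤ ∫ x, G k x ∂μ := integral_nonneg (hG0 k)
  refine (ENNReal.ofReal_le_ofReal_iff (tsum_nonneg hG_int0)).1 ?_
  calc ENNReal.ofReal (∫ x, g x ∂μ) = ∫⁻ x, ENNReal.ofReal (g x) ∂μ :=
        ofReal_integral_eq_lintegral_ofReal hg (.of_forall hg0)
    _ ≤ ∫⁻ x, ∑' k, ENNReal.ofReal (G k x) ∂μ := by
        refine lintegral_mono fun x ↦ ?_
        obtain ⟨k, hk⟩ := hle x
        exact (ENNReal.ofReal_le_ofReal hk).trans (ENNReal.le_tsum k)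
    _ = ∑' k, ∫⁻ x, ENNReal.ofReal (G k x) ∂μ :=
        lintegral_tsum fun k ↦ (hG k).aestronglyMeasurable.aemeasurable.ennreal_ofReal
    _ = ENNReal.ofReal (∑' k, ∫ x, G k x ∂μ) := by
        rw [ENNReal.ofReal_tsum_of_nonneg hG_int0 hsum]
        congr! 2 with k
        exact (ofReal_integral_eq_lintegral_ofReal (hG k) (.of_forall (hG0 k))).symm

section DyadicSum

variable {m : ℝ → ℝ} {B : ℝ}

lemma norm_dyadic_term_le (hm : ∀ r, 0 < r → |m r| ≤ B) {y : ℝ} (hy : 0 < y) (k : ℕ) :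
    ‖(1 / 2 : ℝ) ^ k * m (2 ^ k * y)‖ ≤ (1 / 2 : ℝ) ^ k * B := by
  rw [norm_mul, Real.norm_of_nonneg (by positivity)]
  exact mul_le_mul_of_nonneg_left (hm _ (by positivity)) (by positivity)

lemma summable_dyadic (hm : ∀ r, 0 < r → |m r| ≤ B) {y : ℝ} (hy : 0 < y) :
    Summable fun k : ℕ ↦ (1 / 2 : ℝ) ^ k * m (2 ^ k * y) :=
  .of_norm_bounded (summable_geometric_two.mul_right B) (norm_dyadic_term_le hm hy)

lemma tendsto_tsum_dyadic (hm : ∀ r, 0 < r → |m r| ≤ B) (hlim : Tendsto m (𝓝[>] 0) (𝓝 0)) :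
    Tendsto (fun y ↦ ∑' k : ℕ, (1 / 2 : ℝ) ^ k * m (2 ^ k * y)) (𝓝[>] 0) (𝓝 0) := by
  have hscale (k : ℕ) : Tendsto (fun y : ℝ ↦ 2 ^ k * y) (𝓝[>] 0) (𝓝[>] 0) := by
    refine tendsto_nhdsWithin_iff.2 ⟨?_, ?_⟩
    · have hcont : Continuous fun y : ℝ ↦ 2 ^ k * y := by fun_prop
      exact (hcont.tendsto' 0 0 (mul_zero _)).mono_left nhdsWithin_le_nhds
    · filter_upwards [self_mem_nhdsWithin] with y hy
      exact Set.mem_Ioi.2 (mul_pos (by positivity) hy)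
  have hterm (k : ℕ) : Tendsto (fun y ↦ (1 / 2 : ℝ) ^ k * m (2 ^ k * y)) (𝓝[>] 0) (𝓝 0) := by
    simpa using (hlim.comp (hscale k)).const_mul ((1 / 2 : ℝ) ^ k)
  have h := tendsto_tsum_of_dominated_convergence (summable_geometric_two.mul_right B) hterm
    (eventually_mem_nhdsWithin.mono fun y hy ↦ norm_dyadic_term_le hm hy)
  rwa [tsum_zero] at h

end DyadicSum

section LebesguePoint

variable {d : ℕ} {f : Ed d → ℝ} {x : Ed d}

/-- `x` is a Lebesgue point of `f`: the mean oscillation of `f` about the value `f x` over small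
balls centred at `x` tends to zero. -/
def IsLebesguePoint (f : Ed d → ℝ) (x : Ed d) : Prop :=
  Tendsto (fun r ↦ ⨍ t in closedBall x r, |f t - f x|) (𝓝[>] 0) (𝓝 0)

lemma ae_isLebesguePoint (hf : LocallyIntegrable f) : ∀ᵐ x, IsLebesguePoint f x := by
  filter_upwards [IsUnifLocDoublingMeasure.ae_tendsto_average_norm_sub volume hf 0] with x hx
  exact hx (fun _ ↦ x) id tendsto_id (.of_forall fun r ↦ by simp)

lemma setAverage_nonneg {g : Ed d → ℝ} (hg : ∀ t, 0 ≤ g t) (s : Set (Ed d)) :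
    0 ≤ ⨍ t in s, g t :=
  integral_nonneg hg

lemma setAverage_closedBall_abs_sub_le (hf : Integrable f) (x : Ed d) (c : ℝ) {δ r : ℝ}
    (hδ : 0 < δ) (hr : δ ≤ r) :
    ⨍ t in closedBall x r, |f t - c| ≤
      (volume.real (closedBall x δ))⁻¹ * (∫ t, |f t|) + |c| := by
  have hvol : 0 < volume.real (closedBall x δ) :=
    ENNReal.toReal_pos (measure_closedBall_pos _ _ hδ).ne' measure_closedBall_lt_top.ne
  have hmono : volume.real (closedBall x δ) ≤ volume.real (closedBall x r) :=
    measureReal_mono (closedBall_subset_closedBall hr) measure_closedBall_lt_top.ne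
  have hconst : IntegrableOn (fun _ ↦ |c|) (closedBall x r) :=
    integrableOn_const measure_closedBall_lt_top.ne
  have hint : ∫ t in closedBall x r, |f t - c| ≤
      (∫ t, |f t|) + volume.real (closedBall x r) * |c| :=
    calc ∫ t in closedBall x r, |f t - c|
        ≤ ∫ t in closedBall x r, (|f t| + |c|) :=
          integral_mono_of_nonneg (.of_forall fun t ↦ abs_nonneg _)
            (hf.norm.integrableOn.add hconst) (.of_forall fun t ↦ abs_sub _ _)
      _ = (∫ t in closedBall x r, |f t|) + volume.real (closedBall x r) * |c| := by
          rw [integral_add hf.abs.integrableOn hconst, setIntegral_const, smul_eq_mul]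
      _ ≤ (∫ t, |f t|) + volume.real (closedBall x r) * |c| :=
          add_le_add_left (setIntegral_le_integral hf.abs (.of_forall fun t ↦ abs_nonneg _)) _
  rw [setAverage_eq, smul_eq_mul]
  calc (volume.real (closedBall x r))⁻¹ * ∫ t in closedBall x r, |f t - c|
      ≤ (volume.real (closedBall x r))⁻¹ *
          ((∫ t, |f t|) + volume.real (closedBall x r) * |c|) := by gcongr
    _ = (volume.real (closedBall x r))⁻¹ * (∫ t, |f t|) + |c| := by
        rw [mul_add, inv_mul_cancel_left₀ (hvol.trans_le hmono).ne']
    _ ≤ (volume.real (closedBall x δ))⁻¹ * (∫ t, |f t|) + |c| := by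
        have : 0 ≤ ∫ t, |f t| := integral_nonneg fun t ↦ abs_nonneg (f t)
        gcongr

lemma IsLebesguePoint.exists_setAverage_le (h : IsLebesguePoint f x) (hf : Integrable f) :
    ∃ B, ∀ r, 0 < r → |(⨍ t in closedBall x r, |f t - f x|)| ≤ B := by
  obtain ⟨δ, hδ, hsmall⟩ :=
    mem_nhdsGT_iff_exists_Ioo_subset.1 (h.eventually (gt_mem_nhds one_pos))
  refine ⟨max 1 ((volume.real (closedBall x δ))⁻¹ * (∫ t, |f t|) + |f x|), fun r hr ↦ ?_⟩
  rw [abs_of_nonneg (setAverage_nonneg (fun t ↦ abs_nonneg _) _)]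
  rcases lt_or_ge r δ with hrδ | hrδ
  · exact (hsmall ⟨hr, hrδ⟩).le.trans (le_max_left _ _)
  · exact (setAverage_closedBall_abs_sub_le hf x (f x) hδ hrδ).trans (le_max_right _ _)

lemma exists_halfSpaceKernel_le_dyadic {y : ℝ} (hy : 0 < y) (z : Ed d) :
    ∃ k : ℕ, ‖z‖ ≤ 2 ^ k * y ∧
      halfSpaceKernel (z, y) ≤ 2 ^ (d + 1) * ((1 / 2) ^ k * ((2 ^ k * y) ^ d)⁻¹) := by
  rcases le_or_gt ‖z‖ y with hz | hz
  · refine ⟨0, by simpa using hz, ?_⟩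
    rw [pow_zero, pow_zero, one_mul, one_mul]
    exact (halfSpaceKernel_le_inv_pow (q := (z, y)) hy le_rfl).trans
      (le_mul_of_one_le_left (by positivity) (one_le_pow₀ one_le_two))
  · obtain ⟨n, hn, hn'⟩ := exists_nat_pow_near ((one_le_div hy).2 hz.le) one_lt_two
    rw [le_div_iff₀ hy] at hn
    refine ⟨n + 1, ((div_lt_iff₀ hy).1 hn').le, ?_⟩
    have hlen : (2 ^ n * y) ^ 2 ≤ sqLen (z, y) :=
      (pow_le_pow_left₀ (by positivity) hn 2).trans (le_add_of_nonneg_right (sq_nonneg y))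
    calc halfSpaceKernel (z, y) ≤ y * ((2 ^ n * y) ^ (d + 1))⁻¹ :=
          halfSpaceKernel_le (by positivity) hy.le hlen
      _ = 2 ^ (d + 1) * ((1 / 2) ^ (n + 1) * ((2 ^ (n + 1) * y) ^ d)⁻¹) := by
          rw [pow_succ (2 : ℝ) n, mul_right_comm, mul_pow _ 2 d, one_div, inv_pow]
          field_simp
          ring

lemma integral_halfSpaceKernel_mul_le {g : Ed d → ℝ} (hg0 : ∀ t, 0 ≤ g t)
    (hg : LocallyIntegrable g) {y : ℝ} (hy : 0 < y)
    (hint : Integrable fun t ↦ halfSpaceKernel (x - t, y) * g t)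
    (hsum : Summable fun k : ℕ ↦ (1 / 2 : ℝ) ^ k * ⨍ t in closedBall x (2 ^ k * y), g t) :
    ∫ t, halfSpaceKernel (x - t, y) * g t ≤
      2 ^ (d + 1) * volume.real (ball (0 : Ed d) 1) *
        ∑' k : ℕ, (1 / 2 : ℝ) ^ k * ⨍ t in closedBall x (2 ^ k * y), g t := by
  set c : ℕ → ℝ := fun k ↦ 2 ^ (d + 1) * ((1 / 2) ^ k * ((2 ^ k * y) ^ d)⁻¹) with hc
  have hc0 k : 0 ≤ c k := by positivity
  set G : ℕ → Ed d → ℝ := fun k t ↦ c k * (closedBall x (2 ^ k * y)).indicator g t with hG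
  have hG_int k : ∫ t, G k t = 2 ^ (d + 1) * volume.real (ball (0 : Ed d) 1) *
      ((1 / 2 : ℝ) ^ k * ⨍ t in closedBall x (2 ^ k * y), g t) := by
    have hr : (0 : ℝ) ≤ 2 ^ k * y := by positivity
    rw [integral_const_mul, integral_indicator measurableSet_closedBall,
      ← measure_smul_setAverage g measure_closedBall_lt_top.ne, smul_eq_mul,
      Measure.addHaar_real_closedBall _ _ hr, finrank_euclideanSpace, Fintype.card_fin]
    simp only [hc]
    field_simp
  rw [← tsum_mul_left]
  simp only [← hG_int] at hsum ⊢
  refine integral_le_tsum_integral (fun t ↦ mul_nonneg (halfSpaceKernel_pos hy).le (hg0 t)) hint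
    (fun k t ↦ mul_nonneg (hc0 k) (Set.indicator_nonneg (fun t _ ↦ hg0 t) t)) (fun k ↦ ?_) ?_
    fun t ↦ ?_
  · exact ((integrable_indicator_iff measurableSet_closedBall).2
      (hg.integrableOn_isCompact (isCompact_closedBall _ _))).const_mul _
  · simpa only [hG_int] using hsum.mul_left (2 ^ (d + 1) * volume.real (ball (0 : Ed d) 1))
  · obtain ⟨k, hk, hle⟩ := exists_halfSpaceKernel_le_dyadic hy (x - t)
    refine ⟨k, ?_⟩
    rw [hG]
    beta_reduce
    rw [Set.indicator_of_mem (by rwa [mem_closedBall, dist_comm, dist_eq_norm])]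
    exact mul_le_mul_of_nonneg_right hle (hg0 t)

lemma exists_halfSpaceKernel_le_of_mem_cone (d : ℕ) (a : ℝ) :
    ∃ C ≥ 0, ∀ x : Ed d, ∀ p ∈ cone a x, ∀ t,
      halfSpaceKernel (p.1 - t, p.2) ≤ C * halfSpaceKernel (x - t, p.2) := by
  have hA : (0 : ℝ) < 2 + 2 * a ^ 2 := by positivity
  refine ⟨(2 + 2 * a ^ 2) ^ poissonExponent d, by positivity, fun x p hp t ↦ ?_⟩
  obtain ⟨hy, hpx⟩ := hp
  have hnorm : ‖x - t‖ ≤ ‖p.1 - t‖ + a * p.2 := by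
    rw [dist_eq_norm, norm_sub_rev] at hpx
    linarith [norm_sub_le_norm_sub_add_norm_sub x p.1 t]
  have hlen : sqLen (x - t, p.2) ≤ (2 + 2 * a ^ 2) * sqLen (p.1 - t, p.2) := by
    have := pow_le_pow_left₀ (norm_nonneg _) hnorm 2
    simp only [sqLen]
    nlinarith [sq_nonneg (‖p.1 - t‖ - a * p.2), sq_nonneg (a * ‖p.1 - t‖), sq_nonneg p.2,
      sq_nonneg ‖p.1 - t‖]
  have hpow := Real.rpow_le_rpow_of_nonpos (sqLen_pos (q := (x - t, p.2)) hy) hlen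
    (neg_nonpos.2 (poissonExponent_pos d).le)
  rw [Real.mul_rpow hA.le (sqLen_pos (q := (p.1 - t, p.2)) hy).le, Real.rpow_neg hA.le,
    inv_mul_le_iff₀ (by positivity)] at hpow
  calc halfSpaceKernel (p.1 - t, p.2)
      ≤ p.2 * ((2 + 2 * a ^ 2) ^ poissonExponent d * sqLen (x - t, p.2) ^ (-poissonExponent d)) :=
        mul_le_mul_of_nonneg_left hpow hy.le
    _ = (2 + 2 * a ^ 2) ^ poissonExponent d * halfSpaceKernel (x - t, p.2) := by
        rw [halfSpaceKernel]
        ring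

lemma integrable_halfSpaceKernel_sub (x : Ed d) {y : ℝ} (hy : 0 < y) :
    Integrable fun t ↦ halfSpaceKernel (x - t, y) := by
  have hscale (z : Ed d) : halfSpaceKernel (z, y) = (y ^ d)⁻¹ * halfSpaceKernel (y⁻¹ • z, 1) := by
    rw [← halfSpaceKernel_smul _ hy, smul_inv_smul₀ hy.ne']
  simp only [hscale]
  exact (((integrable_halfSpaceKernel_one d).comp_smul (inv_ne_zero hy.ne')).const_mul
    (y ^ d)⁻¹).comp_sub_left x

lemma integrable_halfSpaceKernel_mul_abs_sub (hf : Integrable f) (x : Ed d) {y : ℝ} (hy : 0 < y)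
    (c : ℝ) : Integrable fun t ↦ halfSpaceKernel (x - t, y) * |f t - c| := by
  have h := ((integrable_halfSpaceKernel_mul (q := (x, y)) hf hy).sub
    ((integrable_halfSpaceKernel_sub x hy).mul_const c)).abs
  refine h.congr (.of_forall fun t ↦ ?_)
  beta_reduce
  rw [Pi.sub_apply, ← mul_sub, abs_mul, abs_of_pos (halfSpaceKernel_pos hy)]

lemma abs_poissonExt_sub_le (hf : Integrable f) {q : Ed d × ℝ} (hq : 0 < q.2) (c : ℝ) :
    |poissonExt f q - c| ≤
      (kernelMass d)⁻¹ * ∫ t, halfSpaceKernel (q.1 - t, q.2) * |f t - c| := by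
  have hdiff : poissonExt f q - c =
      (kernelMass d)⁻¹ * ∫ t, halfSpaceKernel (q.1 - t, q.2) * (f t - c) := by
    simp only [mul_sub]
    rw [integral_sub (integrable_halfSpaceKernel_mul hf hq)
      ((integrable_halfSpaceKernel_sub q.1 hq).mul_const c), mul_sub, ← poissonExt_of_pos f hq,
      ← poissonExt_of_pos (fun _ ↦ c) hq, poissonExt_const]
  rw [hdiff, abs_mul, abs_of_pos (inv_pos.2 (kernelMass_pos d))]
  refine mul_le_mul_of_nonneg_left (abs_integral_le_integral_abs.trans_eq ?_)
    (inv_pos.2 (kernelMass_pos d)).le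
  simp only [abs_mul]
  congr! 3 with t
  exact abs_of_pos (halfSpaceKernel_pos (q := (q.1 - t, q.2)) hq)

lemma IsLebesguePoint.tendsto_poissonExt (h : IsLebesguePoint f x) (hf : Integrable f) (a : ℝ) :
    Tendsto (poissonExt f) (𝓝[cone a x] (x, 0)) (𝓝 (f x)) := by
  obtain ⟨B, hB⟩ := h.exists_setAverage_le hf
  obtain ⟨C, hC0, hC⟩ := exists_halfSpaceKernel_le_of_mem_cone d a
  set S : ℝ → ℝ := fun y ↦
    ∑' k : ℕ, (1 / 2 : ℝ) ^ k * ⨍ t in closedBall x (2 ^ k * y), |f t - f x|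
  set D : ℝ := 2 ^ (d + 1) * volume.real (ball (0 : Ed d) 1)
  have hsnd : Tendsto (fun p : Ed d × ℝ ↦ p.2) (𝓝[cone a x] (x, 0)) (𝓝[>] 0) :=
    tendsto_nhdsWithin_iff.2 ⟨(continuous_snd.tendsto (x, (0 : ℝ))).mono_left nhdsWithin_le_nhds,
      eventually_mem_nhdsWithin.mono fun p hp ↦ hp.1⟩
  have hlim : Tendsto (fun p : Ed d × ℝ ↦ (kernelMass d)⁻¹ * (C * (D * S p.2)))
      (𝓝[cone a x] (x, 0)) (𝓝 0) := by
    have hS : Tendsto (fun p : Ed d × ℝ ↦ S p.2) (𝓝[cone a x] (x, 0)) (𝓝 0) :=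
      (tendsto_tsum_dyadic hB h).comp hsnd
    simpa only [mul_zero] using ((hS.const_mul D).const_mul C).const_mul (kernelMass d)⁻¹
  have hloc : LocallyIntegrable fun t ↦ |f t - f x| :=
    fun t ↦ (hf.locallyIntegrable.sub (locallyIntegrable_const (f x)) t).norm
  rw [tendsto_iff_norm_sub_tendsto_zero]
  refine squeeze_zero' (.of_forall fun p ↦ norm_nonneg _) ?_ hlim
  filter_upwards [self_mem_nhdsWithin] with p hp
  have hint : ∫ t, halfSpaceKernel (p.1 - t, p.2) * |f t - f x| ≤
      C * ∫ t, halfSpaceKernel (x - t, p.2) * |f t - f x| := by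
    rw [← integral_const_mul]
    refine integral_mono (integrable_halfSpaceKernel_mul_abs_sub hf _ hp.1 _)
      ((integrable_halfSpaceKernel_mul_abs_sub hf x hp.1 _).const_mul C) fun t ↦ ?_
    rw [← mul_assoc]
    exact mul_le_mul_of_nonneg_right (hC x p hp t) (abs_nonneg _)
  calc ‖poissonExt f p - f x‖
      ≤ (kernelMass d)⁻¹ * ∫ t, halfSpaceKernel (p.1 - t, p.2) * |f t - f x| :=
        abs_poissonExt_sub_le hf hp.1 (f x)
    _ ≤ (kernelMass d)⁻¹ * (C * ∫ t, halfSpaceKernel (x - t, p.2) * |f t - f x|) :=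
        mul_le_mul_of_nonneg_left hint (inv_pos.2 (kernelMass_pos d)).le
    _ ≤ (kernelMass d)⁻¹ * (C * (D * S p.2)) := by
        refine mul_le_mul_of_nonneg_left (mul_le_mul_of_nonneg_left ?_ hC0)
          (inv_pos.2 (kernelMass_pos d)).le
        exact integral_halfSpaceKernel_mul_le (fun t ↦ abs_nonneg _) hloc hp.1
          (integrable_halfSpaceKernel_mul_abs_sub hf x hp.1 _) (summable_dyadic hB hp.1)

end LebesguePoint

/-! ### Weak limits -/

lemma exists_tendsto_inner {𝕜 H ι : Type*} [RCLike 𝕜] [NormedAddCommGroup H]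
    [InnerProductSpace 𝕜 H] [CompleteSpace H] (l : Ultrafilter ι) {u : ι → H} {C : ℝ}
    (hu : ∀ i, ‖u i‖ ≤ C) :
    ∃ w : H, ∀ k : H, Tendsto (fun i ↦ inner 𝕜 (u i) k) l (𝓝 (inner 𝕜 w k)) := by
  set g : ι → WeakDual 𝕜 H := fun i ↦ StrongDual.toWeakDual (InnerProductSpace.toDual 𝕜 H (u i))
  have hmem : ∀ i, g i ∈ WeakDual.toStrongDual ⁻¹' closedBall (0 : StrongDual 𝕜 H) C := fun i ↦ by
    simpa [g] using hu i
  obtain ⟨ξ, -, hξ⟩ := (WeakDual.isCompact_closedBall (𝕜 := 𝕜) (E := H) 0 C).ultrafilter_le_nhds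
    (l.map g) (le_principal_iff.2 (mem_map.2 (univ_mem' hmem)))
  refine ⟨(InnerProductSpace.toDual 𝕜 H).symm (WeakDual.toStrongDual ξ), fun k ↦ ?_⟩
  rw [InnerProductSpace.toDual_symm_apply]
  exact ((WeakDual.eval_continuous k).tendsto ξ).comp hξ

lemma exists_tendsto_integral_mul {X ι : Type*} [MeasurableSpace X] {μ : Measure X}
    [IsFiniteMeasure μ] (l : Ultrafilter ι) {φ : ι → X → ℝ} {M : ℝ}
    (hφ : ∀ i, AEStronglyMeasurable (φ i) μ) (hM : ∀ i x, |φ i x| ≤ M) :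
    ∃ ψ : X → ℝ, Integrable ψ μ ∧ ∀ k : X → ℝ, MemLp k 2 μ →
      Tendsto (fun i ↦ ∫ x, φ i x * k x ∂μ) l (𝓝 (∫ x, ψ x * k x ∂μ)) := by
  have hLp i : MemLp (φ i) 2 μ := .of_bound (hφ i) M (.of_forall (hM i))
  have hbdd i : ‖(hLp i).toLp‖ ≤ _ := Lp.norm_le_of_ae_bound (le_max_right M 0) <| by
    filter_upwards [(hLp i).coeFn_toLp] with x hx
    rw [hx]
    exact (hM i x).trans (le_max_left M 0)
  have hinner (u : Lp ℝ 2 μ) {k : X → ℝ} (hk : MemLp k 2 μ) :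
      ⟪u, hk.toLp⟫ = ∫ x, u x * k x ∂μ := by
    rw [L2.inner_def]
    refine integral_congr_ae ?_
    filter_upwards [hk.coeFn_toLp] with x hx
    rw [hx, RCLike.inner_apply, conj_trivial, mul_comm]
  obtain ⟨w, hw⟩ := exists_tendsto_inner (𝕜 := ℝ) l hbdd
  refine ⟨w, (Lp.memLp w).integrable one_le_two, fun k hk ↦ ?_⟩
  rw [← hinner w hk]
  refine (hw hk.toLp).congr fun i ↦ ?_
  rw [hinner]
  refine integral_congr_ae ?_
  filter_upwards [(hLp i).coeFn_toLp] with x hx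
  rw [hx]

lemma poissonExt_eq_setIntegral {d : ℕ} {f : Ed d → ℝ} {s : Set (Ed d)} (hf : ∀ x ∉ s, f x = 0)
    {q : Ed d × ℝ} (hq : 0 < q.2) :
    poissonExt f q = (kernelMass d)⁻¹ * ∫ t in s, f t * halfSpaceKernel (q.1 - t, q.2) := by
  rw [poissonExt_of_pos f hq,
    setIntegral_eq_integral_of_forall_compl_eq_zero fun x hx ↦ by rw [hf x hx, zero_mul]]
  simp only [mul_comm]

lemma exists_tendsto_poissonExt {d : ℕ} {ι : Type*} (l : Ultrafilter ι) {s : Set (Ed d)}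
    (hs : MeasurableSet s) (hs_fin : volume s ≠ ⊤) {φ : ι → Ed d → ℝ} {M : ℝ}
    (hφ : ∀ i, AEStronglyMeasurable (φ i)) (hM : ∀ i x, |φ i x| ≤ M)
    (hφ0 : ∀ i, ∀ x ∉ s, φ i x = 0) :
    ∃ Φ : Ed d → ℝ, Integrable Φ ∧ ∀ q : Ed d × ℝ, 0 < q.2 →
      Tendsto (fun i ↦ poissonExt (φ i) q) l (𝓝 (poissonExt Φ q)) := by
  have : IsFiniteMeasure (volume.restrict s) := ⟨by
    rw [Measure.restrict_apply_univ]
    exact hs_fin.lt_top⟩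
  obtain ⟨ψ, hψ, hlim⟩ :=
    exists_tendsto_integral_mul (μ := volume.restrict s) l (fun i ↦ (hφ i).restrict) hM
  refine ⟨s.indicator ψ, (integrable_indicator_iff hs).2 hψ, fun q hq ↦ ?_⟩
  have hkernel : MemLp (fun t ↦ halfSpaceKernel (q.1 - t, q.2)) 2 (volume.restrict s) := by
    refine .of_bound ((continuous_halfSpaceKernel_slice hq).comp
      (continuous_sub_left q.1)).aestronglyMeasurable (q.2 ^ d)⁻¹ (.of_forall fun t ↦ ?_)
    have hpos := halfSpaceKernel_pos (q := (q.1 - t, q.2)) hq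
    rw [Real.norm_eq_abs, abs_of_pos hpos]
    exact halfSpaceKernel_le_inv_pow hq le_rfl
  have hΦ : ∫ t in s, s.indicator ψ t * halfSpaceKernel (q.1 - t, q.2) =
      ∫ t in s, ψ t * halfSpaceKernel (q.1 - t, q.2) :=
    setIntegral_congr_fun hs fun t ht ↦ by simp only [Set.indicator_of_mem ht]
  simp only [poissonExt_eq_setIntegral (hφ0 _) hq]
  rw [poissonExt_eq_setIntegral (fun x hx ↦ Set.indicator_of_notMem hx ψ) hq, hΦ]
  exact (hlim _ hkernel).const_mul _

/-! ### Comparison by the maximum principle -/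

section Comparison

variable {d : ℕ} {v : Ed d × ℝ → ℝ} {S T : Set (Ed d × ℝ)} {F : Set (Ed d)}
  {φ f : Ed d → ℝ} {b ε τ M c : ℝ} {p : Ed d × ℝ}

/-- `v` is continuous on `S` and both `v` and its generalized Laplacian are bounded by `M`
on `S`. -/
structure BddGenLapOn (v : Ed d × ℝ → ℝ) (S : Set (Ed d × ℝ)) (M : ℝ) : Prop where
  continuousOn : ContinuousOn v S
  abs_le : ∀ p ∈ S, |v p| ≤ M
  exists_hasGenLap : ∀ p ∈ S, ∃ L, |L| ≤ M ∧ HasGenLap (axes d) v p L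

lemma BddGenLapOn.neg (hv : BddGenLapOn v S M) : BddGenLapOn (fun p ↦ -v p) S M where
  continuousOn := hv.continuousOn.neg
  abs_le p hp := (abs_neg _).trans_le (hv.abs_le p hp)
  exists_hasGenLap p hp :=
    let ⟨L, hLM, hL⟩ := hv.exists_hasGenLap p hp
    ⟨-L, (abs_neg L).trans_le hLM, hL.neg⟩

lemma BddGenLapOn.mono (hv : BddGenLapOn v S M) (hTS : T ⊆ S) : BddGenLapOn v T M where
  continuousOn := hv.continuousOn.mono hTS
  abs_le p hp := hv.abs_le p (hTS hp)
  exists_hasGenLap p hp := hv.exists_hasGenLap p (hTS hp)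

lemma continuous_infDist_fst (F : Set (Ed d)) : Continuous fun p : Ed d × ℝ ↦ infDist p.1 F :=
  (continuous_infDist_pt F).comp continuous_fst

/-- The part between the heights `ε` and `τ` of the union of the closed cones of aperture `b` with
vertices in `F`. -/
def closedSawtooth (F : Set (Ed d)) (b ε τ : ℝ) : Set (Ed d × ℝ) :=
  {p | ε ≤ p.2 ∧ p.2 ≤ τ ∧ infDist p.1 F ≤ b * p.2}

lemma isCompact_closedSawtooth (hF : IsCompact F) (hF₀ : F.Nonempty) (hb : 0 ≤ b) (ε τ : ℝ) :
    IsCompact (closedSawtooth F b ε τ) := by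
  have hclosed : IsClosed (closedSawtooth F b ε τ) :=
    (isClosed_le continuous_const continuous_snd).inter
      ((isClosed_le continuous_snd continuous_const).inter
        (isClosed_le (continuous_infDist_fst F) (by fun_prop)))
  refine ((hF.cthickening (r := b * τ)).prod (isCompact_Icc (a := ε) (b := τ))).of_isClosed_subset
    hclosed fun p hp ↦ ⟨?_, hp.1, hp.2.1⟩
  obtain ⟨z, hz, hpz⟩ := hF.exists_infDist_eq_dist hF₀ p.1
  refine mem_cthickening_of_dist_le _ z _ _ hz (hpz ▸ hp.2.2.trans ?_)
  gcongr
  exact hp.2.1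

lemma closedSawtooth_mem_nhds (hε : ε < p.2) (hτ : p.2 < τ) (hF : infDist p.1 F < b * p.2) :
    closedSawtooth F b ε τ ∈ 𝓝 p := by
  filter_upwards [continuousAt_snd.eventually (lt_mem_nhds hε),
    continuousAt_snd.eventually (gt_mem_nhds hτ),
    (isOpen_lt (continuous_infDist_fst F) (by fun_prop : Continuous fun p : Ed d × ℝ ↦
      b * p.2)).mem_nhds hF] with q hqε hqτ hqF
  exact ⟨hqε.le, hqτ.le, hqF.le⟩

/-- The function used to compare `v` with a Poisson integral on a sawtooth region of height `τ`:
the Poisson integral is large on the lateral boundary, the linear term is large on the top, and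
the Laplacian of the concave term dominates the Laplacian of `v`. -/
def barrier (M c τ : ℝ) (f : Ed d → ℝ) (p : Ed d × ℝ) : ℝ :=
  2 * M / c * poissonExt f p + (2 * M / τ * p.2 + (M + 1) * (p.2 - p.2 ^ 2))

lemma hasGenLap_vertical_quadratic (A B : ℝ) (p : Ed d × ℝ) :
    HasGenLap (axes d) (fun q ↦ A * q.2 + B * (q.2 - q.2 ^ 2)) p (-(2 * B)) := by
  refine tendsto_const_nhds.congr' ?_
  filter_upwards [self_mem_nhdsWithin] with s (hs : 0 < s)
  simp only [discreteLap, secondDiffQuot, axes, Fintype.sum_option, Prod.snd_add, Prod.snd_sub,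
    Prod.smul_snd, smul_eq_mul, mul_one, mul_zero, add_zero, sub_zero]
  rw [Finset.sum_eq_zero fun i _ ↦ by ring]
  field_simp
  ring

lemma hasGenLap_barrier (hf : Integrable f) (hp : 0 < p.2) (M c τ : ℝ) :
    HasGenLap (axes d) (barrier M c τ f) p (-(2 * (M + 1))) := by
  have h := ((hasGenLap_poissonExt hf hp).const_mul (2 * M / c)).add
    (hasGenLap_vertical_quadratic (2 * M / τ) (M + 1) p)
  rwa [mul_zero, zero_add] at h

lemma continuousAt_barrier (hf : Integrable f) (hp : 0 < p.2) (M c τ : ℝ) :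
    ContinuousAt (barrier M c τ f) p :=
  (continuousAt_const.mul (continuousAt_poissonExt hf hp)).add (by fun_prop)

lemma barrier_nonneg (hM : 0 ≤ M) (hc : 0 < c) (hf : ∀ t, 0 ≤ f t) (hp : 0 ≤ p.2) (hpτ : p.2 ≤ τ)
    (hτ : τ ≤ 1) : 0 ≤ barrier M c τ f p := by
  have hpoisson := poissonExt_nonneg hf p
  have hτ₀ : 0 ≤ τ := hp.trans hpτ
  have hquad : 0 ≤ p.2 - p.2 ^ 2 := by nlinarith
  unfold barrier
  positivity

lemma two_mul_le_barrier (hM : 0 ≤ M) (hc : 0 < c) (hf : ∀ t, 0 ≤ f t) (hp : 0 ≤ p.2)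
    (hpτ : p.2 ≤ τ) (hτ : τ ≤ 1) (h : p.2 = τ ∧ 0 < τ ∨ c ≤ poissonExt f p) :
    2 * M ≤ barrier M c τ f p := by
  have hlateral : 0 ≤ 2 * M / c * poissonExt f p :=
    mul_nonneg (by positivity) (poissonExt_nonneg hf p)
  have htop : 0 ≤ 2 * M / τ * p.2 := mul_nonneg (div_nonneg (by positivity) (hp.trans hpτ)) hp
  have hquad : 0 ≤ (M + 1) * (p.2 - p.2 ^ 2) := mul_nonneg (by positivity) (by nlinarith)
  unfold barrier
  rcases h with ⟨rfl, hp₀⟩ | h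
  · rw [div_mul_cancel₀ _ hp₀.ne'] at htop ⊢
    linarith
  · have hge : 2 * M / c * c ≤ 2 * M / c * poissonExt f p := by gcongr
    rw [div_mul_cancel₀ _ hc.ne'] at hge
    linarith

lemma tendsto_barrier {l : Filter (Ed d × ℝ)} (hf : Tendsto (poissonExt f) l (𝓝 0))
    (hl : Tendsto Prod.snd l (𝓝 0)) (M c τ : ℝ) : Tendsto (barrier M c τ f) l (𝓝 0) := by
  have h := (hf.const_mul (2 * M / c)).add
    ((hl.const_mul (2 * M / τ)).add ((hl.sub (hl.pow 2)).const_mul (M + 1)))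
  rwa [show 2 * M / c * 0 + (2 * M / τ * 0 + (M + 1) * (0 - 0 ^ 2)) = 0 by ring] at h

lemma sub_poissonExt_le_barrier (hF : IsCompact F) (hF₀ : F.Nonempty) (hb : 0 ≤ b)
    (hε : 0 < ε) (hτ : τ ≤ 1) (hc : 0 < c) (hv : BddGenLapOn v (closedSawtooth F b ε τ) M)
    (hφ : Continuous φ) (hφ_int : Integrable φ) (hφM : ∀ x, |φ x| ≤ M)
    (hφv : ∀ x, infDist x F ≤ b * ε → φ x = v (x, ε))
    (hf_int : Integrable f) (hf : ∀ x, 0 ≤ f x)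
    (hfc : ∀ p ∈ closedSawtooth F b ε τ, infDist p.1 F = b * p.2 → c ≤ poissonExt f p)
    (hp : p ∈ closedSawtooth F b ε τ) :
    v p - poissonExt φ (p + (0, -ε)) ≤ barrier M c τ f p := by
  have hM : 0 ≤ M := (abs_nonneg _).trans (hv.abs_le p hp)
  suffices h : ∀ p ∈ closedSawtooth F b ε τ,
      v p - poissonExt φ (p + (0, -ε)) - barrier M c τ f p ≤ 0 from sub_nonpos.1 (h p hp)
  have hcont : ContinuousOn (fun p ↦ v p - poissonExt φ (p + (0, -ε)) - barrier M c τ f p)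
      (closedSawtooth F b ε τ) :=
    (hv.continuousOn.sub
      ((continuous_poissonExt hφ hφM).comp (continuous_add_const _)).continuousOn).sub
      fun q hq ↦ (continuousAt_barrier hf_int (hε.trans_le hq.1) M c τ).continuousWithinAt
  refine nonpos_of_hasGenLap_pos (b := axes d) (isCompact_closedSawtooth hF hF₀ hb ε τ) hcont
    fun q hq ↦ ?_
  obtain ⟨hqε, hqτ, hqF⟩ := id hq
  have hq₀ : 0 < q.2 := hε.trans_le hqε
  have hdiff : v q - poissonExt φ (q + (0, -ε)) ≤ 2 * M := by
    linarith [(abs_le.1 (hv.abs_le q hq)).2, (abs_le.1 (abs_poissonExt_le hφM (q + (0, -ε)))).1]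
  rcases hqε.eq_or_lt with rfl | hqε
  · have htrace : poissonExt φ (q + (0, -q.2)) = v q := by
      rw [show q + (0, -q.2) = (q.1, 0) by ext1 <;> simp, poissonExt_zero, hφv _ hqF]
    exact .inl (by linarith [barrier_nonneg hM hc hf hq₀.le hqτ hτ])
  rcases hqτ.eq_or_lt with htop | hqτ'
  · have := two_mul_le_barrier hM hc hf hq₀.le hqτ hτ (.inl ⟨htop, htop ▸ hq₀⟩)
    exact .inl (by linarith)
  rcases hqF.eq_or_lt with hlateral | hqF
  · have := two_mul_le_barrier hM hc hf hq₀.le hqτ hτ (.inr (hfc q hq hlateral))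
    exact .inl (by linarith)
  obtain ⟨L, hLM, hL⟩ := hv.exists_hasGenLap q hq
  have hφL : HasGenLap (axes d) (fun q ↦ poissonExt φ (q + (0, -ε))) q 0 :=
    (hasGenLap_poissonExt hφ_int (by simpa using hqε)).comp_add_right
  exact .inr ⟨closedSawtooth_mem_nhds hqε hqτ' hqF, _, by linarith [(abs_le.1 hLM).1],
    (hL.sub hφL).sub (hasGenLap_barrier hf_int hq₀ M c τ)⟩

theorem abs_sub_poissonExt_le_barrier (hF : IsCompact F) (hF₀ : F.Nonempty) (hb : 0 ≤ b)
    (hε : 0 < ε) (hτ : τ ≤ 1) (hc : 0 < c) (hv : BddGenLapOn v (closedSawtooth F b ε τ) M)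
    (hφ : Continuous φ) (hφ_int : Integrable φ) (hφM : ∀ x, |φ x| ≤ M)
    (hφv : ∀ x, infDist x F ≤ b * ε → φ x = v (x, ε))
    (hf_int : Integrable f) (hf : ∀ x, 0 ≤ f x)
    (hfc : ∀ p ∈ closedSawtooth F b ε τ, infDist p.1 F = b * p.2 → c ≤ poissonExt f p)
    (hp : p ∈ closedSawtooth F b ε τ) :
    |v p - poissonExt φ (p + (0, -ε))| ≤ barrier M c τ f p := by
  refine abs_le'.2 ⟨sub_poissonExt_le_barrier hF hF₀ hb hε hτ hc hv hφ hφ_int hφM hφv hf_int hf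
    hfc hp, ?_⟩
  have hneg := sub_poissonExt_le_barrier (φ := fun x ↦ -φ x) hF hF₀ hb hε hτ hc hv.neg hφ.neg
    hφ_int.neg (fun x ↦ (abs_neg _).trans_le (hφM x)) (fun x hx ↦ congrArg _ (hφv x hx)) hf_int hf
    hfc hp
  rw [poissonExt_neg] at hneg
  linarith

end Comparison

/-! ### The local Fatou theorem -/

lemma norm_le_add_infDist {V : Type*} [SeminormedAddCommGroup V] {F : Set V} (hF₀ : F.Nonempty)
    {ρ : ℝ} (hρ : ∀ x ∈ F, ‖x‖ ≤ ρ) (x : V) : ‖x‖ ≤ ρ + infDist x F := by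
  rw [← sub_le_iff_le_add', le_infDist hF₀]
  intro z hz
  rw [dist_eq_norm]
  linarith [hρ z hz, norm_sub_norm_le x z]

lemma exists_continuous_bounded_extension {V : Type*} [NormedAddCommGroup V] {T : Set V}
    {g : V → ℝ} {ρ M : ℝ} (hT : IsClosed T) (hTρ : ∀ x ∈ T, ‖x‖ ≤ ρ) (hM : 0 ≤ M)
    (hg : ContinuousOn g T) (hgM : ∀ x ∈ T, |g x| ≤ M) :
    ∃ φ : V → ℝ, Continuous φ ∧ (∀ x, |φ x| ≤ M) ∧ (∀ x ∉ closedBall 0 (ρ + 1), φ x = 0) ∧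
      Set.EqOn φ g T := by
  obtain ⟨G, hGM, hGT⟩ := ContinuousMap.exists_restrict_eq_forall_mem_of_closed
    ⟨T.domRestrict g, hg.domRestrict⟩ (t := Set.Icc (-M) M)
    (fun x ↦ abs_le.1 (hgM x x.2)) ⟨0, by simpa using hM⟩ hT
  refine ⟨fun x ↦ max 0 (min 1 (ρ + 1 - ‖x‖)) * G x, by fun_prop, fun x ↦ ?_, fun x hx ↦ ?_,
    fun x hx ↦ ?_⟩
  · have hcutoff : max 0 (min 1 (ρ + 1 - ‖x‖)) ≤ 1 := max_le zero_le_one (min_le_left _ _)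
    rw [abs_mul, abs_of_nonneg (le_max_left _ _)]
    exact (mul_le_of_le_one_left (abs_nonneg _) hcutoff).trans (abs_le.2 (hGM x))
  · rw [mem_closedBall_zero_iff, not_le] at hx
    simp only
    rw [max_eq_left ((min_le_right _ _).trans (by linarith)), zero_mul]
  · simp only
    rw [min_eq_left (by linarith [hTρ x hx]), max_eq_right zero_le_one, one_mul]
    exact DFunLike.congr_fun hGT ⟨x, hx⟩

lemma exists_lateral_datum {d : ℕ} {F : Set (Ed d)} (hF : MeasurableSet F) {b : ℝ} (hb : 0 < b)
    (r : ℝ) : ∃ (f : Ed d → ℝ) (c : ℝ), Integrable f ∧ (∀ x, 0 ≤ f x) ∧ 0 < c ∧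
      (∀ x ∈ F, f x = 0) ∧ ∀ q : Ed d × ℝ, 0 < q.2 → q.2 ≤ 1 → ‖q.1‖ ≤ r →
        b * q.2 ≤ infDist q.1 F → c ≤ poissonExt f q := by
  obtain ⟨c, hc, hlower⟩ := exists_forall_le_poissonExt d hb
  have hint : Integrable ((closedBall (0 : Ed d) (r + b) \ F).indicator fun _ ↦ (1 : ℝ)) :=
    (integrable_indicator_iff (measurableSet_closedBall.diff hF)).2 <|
      integrableOn_const ((measure_mono Set.sdiff_subset).trans_lt measure_closedBall_lt_top).ne
  have hnonneg : ∀ x, 0 ≤ (closedBall (0 : Ed d) (r + b) \ F).indicator (fun _ ↦ (1 : ℝ)) x :=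
    Set.indicator_nonneg fun _ _ ↦ zero_le_one
  refine ⟨_, c, hint, hnonneg, hc, fun x hx ↦ Set.indicator_of_notMem (fun h ↦ h.2 hx) _,
    fun q hq hq₁ hqr hqF ↦ hlower _ hint hnonneg q hq fun t ht ↦ ?_⟩
  rw [mem_ball] at ht
  have htr : t ∈ closedBall (0 : Ed d) (r + b) := by
    rw [mem_closedBall_zero_iff]
    rw [dist_eq_norm] at ht
    nlinarith [norm_sub_norm_le t q.1]
  have htF : t ∉ F := fun h ↦ by
    linarith [infDist_le_dist_of_mem (x := q.1) h, dist_comm t q.1]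
  rw [Set.indicator_of_mem (show t ∈ closedBall 0 (r + b) \ F from ⟨htr, htF⟩)]

section LocalFatou

variable {d : ℕ} {v : Ed d × ℝ → ℝ} {F : Set (Ed d)} {f : Ed d → ℝ} {a b c h ε τ M : ℝ}

/-- The part below the height `h` of the union of the open cones of aperture `a` with vertices
in `F`. -/
def sawtooth (F : Set (Ed d)) (a h : ℝ) : Set (Ed d × ℝ) :=
  {p | 0 < p.2 ∧ p.2 < h ∧ infDist p.1 F < a * p.2}

lemma isOpen_sawtooth (F : Set (Ed d)) (a h : ℝ) : IsOpen (sawtooth F a h) :=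
  (isOpen_lt continuous_const continuous_snd).inter
    ((isOpen_lt continuous_snd continuous_const).inter
      (isOpen_lt (continuous_infDist_fst F) (by fun_prop)))

lemma closedSawtooth_subset_sawtooth (hε : 0 < ε) (hτ : τ < h) (hba : b < a) :
    closedSawtooth F b ε τ ⊆ sawtooth F a h := fun _ hp ↦
  ⟨hε.trans_le hp.1, hp.2.1.trans_lt hτ,
    hp.2.2.trans_lt (mul_lt_mul_of_pos_right hba (hε.trans_le hp.1))⟩

lemma exists_trace_extension (hF₀ : F.Nonempty) (hb : 0 ≤ b) (hετ : ε ≤ τ)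
    (hv : BddGenLapOn v (closedSawtooth F b ε τ) M) (hM : 0 ≤ M) {r : ℝ}
    (hr : ∀ x ∈ F, ‖x‖ + b * τ ≤ r) :
    ∃ φ : Ed d → ℝ, Continuous φ ∧ (∀ x, |φ x| ≤ M) ∧ (∀ x ∉ closedBall 0 (r + 1), φ x = 0) ∧
      ∀ x, infDist x F ≤ b * ε → φ x = v (x, ε) := by
  have hmem : ∀ x, infDist x F ≤ b * ε → (x, ε) ∈ closedSawtooth F b ε τ :=
    fun x hx ↦ ⟨le_rfl, hετ, hx⟩
  refine exists_continuous_bounded_extension (T := {x | infDist x F ≤ b * ε})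
    (g := fun x ↦ v (x, ε)) (isClosed_le (continuous_infDist_pt F) continuous_const)
    (fun x hx ↦ ?_) hM (hv.continuousOn.comp (by fun_prop) hmem) fun x hx ↦ hv.abs_le _ (hmem x hx)
  have hbε : infDist x F ≤ b * τ := hx.trans (by gcongr)
  have hnorm := norm_le_add_infDist hF₀ (ρ := r - b * τ) (fun z hz ↦ by linarith [hr z hz]) x
  linarith

lemma exists_abs_sub_poissonExt_le_barrier (hF : IsCompact F) (hF₀ : F.Nonempty) (hb : 0 < b)
    (hba : b < a) (hτ : 0 < τ) (hτ₁ : τ ≤ 1) (hτh : τ < h) (hc : 0 < c)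
    (hv : BddGenLapOn v (sawtooth F a h) M) (hf_int : Integrable f) (hf : ∀ x, 0 ≤ f x)
    (hfc : ∀ p : Ed d × ℝ, 0 < p.2 → p.2 ≤ τ → infDist p.1 F = b * p.2 → c ≤ poissonExt f p) :
    ∃ Φ : Ed d → ℝ, Integrable Φ ∧ ∀ q : Ed d × ℝ, 0 < q.2 → q.2 < τ →
      infDist q.1 F ≤ b * q.2 → |v q - poissonExt Φ q| ≤ barrier M c τ f q := by
  set ε : ℕ → ℝ := fun n ↦ τ * (1 / (n + 1))
  have hε : ∀ n, 0 < ε n := fun n ↦ by positivity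
  have hετ : ∀ n, ε n ≤ τ := fun n ↦ mul_le_of_le_one_right hτ.le (by
    rw [div_le_one₀ (by positivity)]
    linarith [Nat.cast_nonneg (α := ℝ) n])
  have hε_lim : Tendsto ε (hyperfilter ℕ : Filter ℕ) (𝓝 0) := by
    simpa only [mul_zero] using (tendsto_one_div_add_atTop_nhds_zero_nat.const_mul τ).mono_left
      Nat.hyperfilter_le_atTop
  have hv' n : BddGenLapOn v (closedSawtooth F b (ε n) τ) M :=
    hv.mono (closedSawtooth_subset_sawtooth (hε n) hτh hba)
  obtain ⟨z, hz⟩ := hF₀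
  have hM : 0 ≤ M := (abs_nonneg _).trans ((hv' 0).abs_le (z, τ)
    ⟨hετ 0, le_rfl, by rw [infDist_zero_of_mem hz]; positivity⟩)
  obtain ⟨ρ, hρ⟩ := hF.isBounded.exists_norm_le
  choose φ hφ hφM hφ₀ hφv using fun n ↦ exists_trace_extension ⟨z, hz⟩ hb.le (hετ n) (hv' n) hM
    (r := ρ + b * τ) fun x hx ↦ add_le_add_left (hρ x hx) _
  have hφ_int n : Integrable (φ n) := (hφ n).integrable_of_hasCompactSupport
    (.intro (isCompact_closedBall 0 _) (hφ₀ n))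
  obtain ⟨Φ, hΦ, hlim⟩ := exists_tendsto_poissonExt (hyperfilter ℕ) measurableSet_closedBall
    measure_closedBall_lt_top.ne (fun n ↦ (hφ n).aestronglyMeasurable) hφM hφ₀
  refine ⟨Φ, hΦ, fun q hq hqτ hqF ↦ ?_⟩
  have hqn : Tendsto (fun n ↦ q + (0, ε n)) (hyperfilter ℕ : Filter ℕ) (𝓝 q) := by
    have hvert : Tendsto (fun n ↦ ((0 : Ed d), ε n)) (hyperfilter ℕ : Filter ℕ) (𝓝 0) :=
      tendsto_const_nhds.prodMk_nhds hε_lim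
    simpa using hvert.const_add q
  have hqv : ContinuousAt v q := hv.continuousOn.continuousAt <|
    (isOpen_sawtooth F a h).mem_nhds ⟨hq, hqτ.trans hτh, hqF.trans_lt (by gcongr)⟩
  refine le_of_tendsto_of_tendsto ((hqv.tendsto.comp hqn).sub (hlim q hq)).abs
    ((continuousAt_barrier hf_int hq M c τ).tendsto.comp hqn) ?_
  filter_upwards [(continuousAt_snd.tendsto.comp hqn).eventually (gt_mem_nhds hqτ)] with n hn
  have hmem : q + (0, ε n) ∈ closedSawtooth F b (ε n) τ := by
    refine ⟨by simpa using hq.le, hn.le, ?_⟩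
    simpa using hqF.trans (by gcongr; simpa using (hε n).le)
  have hcomp := abs_sub_poissonExt_le_barrier hF ⟨z, hz⟩ hb.le (hε n) hτ₁ hc (hv' n) (hφ n)
    (hφ_int n) (hφM n) (hφv n) hf_int hf (fun p hp ↦ hfc p ((hε n).trans_le hp.1) hp.2.1) hmem
  rwa [show q + (0, ε n) + (0, -ε n) = q by ext1 <;> simp] at hcomp

theorem ae_exists_tendsto_of_bddGenLapOn_sawtooth (hF : IsCompact F) (ha : 0 < a) (hh : 0 < h)
    (hv : BddGenLapOn v (sawtooth F a h) M) :
    ∀ᵐ x : Ed d, x ∈ F → ∃ L : ℝ, ∀ A : ℝ,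
      Tendsto v (𝓝[cone A x] (x, (0 : ℝ))) (𝓝 L) := by
  rcases F.eq_empty_or_nonempty with rfl | hF₀
  · simp
  obtain ⟨ρ, hρ⟩ := hF.isBounded.exists_norm_le
  have hb : 0 < a / 2 := half_pos ha
  obtain ⟨τ, hτ, hτ₁, hτh⟩ : ∃ τ : ℝ, 0 < τ ∧ τ ≤ 1 ∧ τ < h :=
    ⟨min 1 (h / 2), by positivity, min_le_left _ _, (min_le_right _ _).trans_lt (half_lt_self hh)⟩
  obtain ⟨f, c, hf_int, hf, hc, hfF, hfc⟩ := exists_lateral_datum hF.measurableSet hb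
    (ρ + max 1 (a / 2))
  obtain ⟨Φ, hΦ, hbound⟩ := exists_abs_sub_poissonExt_le_barrier hF hF₀ hb (half_lt_self ha) hτ hτ₁
    hτh hc hv hf_int hf fun p hp hpτ hpF ↦ hfc p hp (hpτ.trans hτ₁)
      ((norm_le_add_infDist hF₀ hρ p.1).trans (by
        rw [hpF]
        gcongr
        exact (mul_le_of_le_one_right hb.le (hpτ.trans hτ₁)).trans (le_max_right _ _))) hpF.ge
  filter_upwards [ae_isLebesguePoint hΦ.locallyIntegrable,
    ae_isLebesguePoint hf_int.locallyIntegrable] with x hxΦ hxf hxF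
  refine ⟨Φ x, fun A ↦ ?_⟩
  have hfx : Tendsto (poissonExt f) (𝓝[cone A x] (x, 0)) (𝓝 0) :=
    hfF x hxF ▸ hxf.tendsto_poissonExt hf_int A
  have hsnd : Tendsto Prod.snd (𝓝[cone A x] (x, (0 : ℝ))) (𝓝 0) :=
    (continuous_snd.tendsto (x, (0 : ℝ))).mono_left nhdsWithin_le_nhds
  have hnorm : Tendsto (fun q : Ed d × ℝ ↦ ‖q.1‖) (𝓝[cone A x] (x, (0 : ℝ))) (𝓝 ‖x‖) :=
    (continuous_fst.norm.tendsto (x, (0 : ℝ))).mono_left nhdsWithin_le_nhds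
  suffices hdiff : Tendsto (fun q ↦ v q - poissonExt Φ q) (𝓝[cone A x] (x, 0)) (𝓝 0) by
    simpa using hdiff.add (hxΦ.tendsto_poissonExt hΦ A)
  refine squeeze_zero_norm' ?_ (tendsto_barrier hfx hsnd M c τ)
  filter_upwards [self_mem_nhdsWithin, hfx.eventually (gt_mem_nhds hc),
    hsnd.eventually (gt_mem_nhds hτ), hnorm.eventually (gt_mem_nhds (lt_add_one ‖x‖))]
    with q hq hqc hqτ hqx
  refine hbound q hq.1 hqτ (le_of_not_gt fun hqF ↦ hqc.not_ge ?_)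
  exact hfc q hq.1 (hqτ.le.trans hτ₁) (by linarith [hρ x hxF, le_max_left 1 (a / 2)]) hqF.le

end LocalFatou

/-! ### Removing the first order terms of the Dunkl Laplacian -/

section DunklWeight

variable {d : ℕ} {Rp : Finset (Ed d)} {κ : Ed d → ℝ} {u : Ed d × ℝ → ℝ} {p : Ed d × ℝ}

/-- The weight `∏_{α ∈ R₊} |⟨α,x⟩|^{κ(α)}` of Dunkl theory at `p = (x,y)`. It is written with
`Real.log`, which satisfies `Real.log t = log |t|`; the value is junk when `x` lies on a reflecting
hyperplane. -/
def dunklWeight (Rp : Finset (Ed d)) (κ : Ed d → ℝ) (p : Ed d × ℝ) : ℝ :=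
  Real.exp (∑ α ∈ Rp, κ α * Real.log ⟪α, p.1⟫)

lemma dunklWeight_pos (Rp : Finset (Ed d)) (κ : Ed d → ℝ) (p : Ed d × ℝ) :
    0 < dunklWeight Rp κ p :=
  Real.exp_pos _

lemma contDiffAt_dunklWeight (κ : Ed d → ℝ) (hp : ∀ α ∈ Rp, ⟪α, p.1⟫ ≠ 0) :
    ContDiffAt ℝ 2 (dunklWeight Rp κ) p :=
  (ContDiffAt.sum fun α hα ↦ contDiffAt_const.mul
    (ContDiffAt.log (contDiffAt_const.inner ℝ contDiffAt_fst) (hp α hα))).exp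

lemma fderiv_dunklWeight (κ : Ed d → ℝ) (hp : ∀ α ∈ Rp, ⟪α, p.1⟫ ≠ 0) (e : Ed d × ℝ) :
    fderiv ℝ (dunklWeight Rp κ) p e =
      dunklWeight Rp κ p * ∑ α ∈ Rp, κ α * (⟪α, e.1⟫ / ⟪α, p.1⟫) := by
  have hinner (α : Ed d) := ((innerSL ℝ α).comp (.fst ℝ (Ed d) ℝ)).hasFDerivAt (x := p)
  have h := (HasFDerivAt.fun_sum fun α hα ↦ ((hinner α).log (hp α hα)).const_mul (κ α)).exp
  have hfd : fderiv ℝ (dunklWeight Rp κ) p = _ := h.fderiv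
  rw [hfd]
  simp [dunklWeight, div_eq_inv_mul]

/-- The first order terms of `dunklLap` are the cross terms of the product rule for the weight. -/
theorem lapE_dunklWeight_mul (κ : Ed d → ℝ) (hp : ∀ α ∈ Rp, ⟪α, p.1⟫ ≠ 0)
    (hu : ContDiffAt ℝ 2 u p) :
    lapE (fun q ↦ dunklWeight Rp κ q * u q) p =
      dunklWeight Rp κ p * (dunklLap Rp κ u p +
        2 * ∑ α ∈ Rp, κ α * ((u p - u (reflAt α p.1, p.2)) / ⟪α, p.1⟫ ^ 2)) +
      u p * lapE (dunklWeight Rp κ) p := by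
  have hroot (α : Ed d) :
      ∑ j, ⟪α, (axes d j).1⟫ * fderiv ℝ u p (axes d j) = fderiv ℝ u p (α, 0) := by
    simp only [← sum_inner_smul_axes α, map_sum, map_smul, smul_eq_mul]
  have hcross : ∑ j, fderiv ℝ (dunklWeight Rp κ) p (axes d j) * fderiv ℝ u p (axes d j) =
      dunklWeight Rp κ p * ∑ α ∈ Rp, κ α * (fderiv ℝ u p (α, 0) / ⟪α, p.1⟫) := by
    simp only [fderiv_dunklWeight κ hp, ← hroot, mul_assoc, ← Finset.mul_sum, Finset.sum_mul,
      Finset.sum_div]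
    rw [Finset.sum_comm]
    simp only [← Finset.mul_sum, div_mul_eq_mul_div]
  rw [lapE_mul (contDiffAt_dunklWeight κ hp) hu, hcross, dunklLap]
  simp only [mul_sub, Finset.sum_sub_distrib]
  ring

variable {S K : Set (Ed d × ℝ)} {N : ℝ}

lemma abs_lapE_dunklWeight_mul_le (hp : ∀ α ∈ Rp, ⟪α, p.1⟫ ≠ 0) (hu : ContDiffAt ℝ 2 u p)
    (hlap : dunklLap Rp κ u p = 0) (hbd : |u p| ≤ N)
    (hrefl : ∀ α ∈ Rp, |u (reflAt α p.1, p.2)| ≤ N) :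
    |lapE (fun q ↦ dunklWeight Rp κ q * u q) p| ≤
      dunklWeight Rp κ p * (2 * ∑ α ∈ Rp, |κ α| * ((N + N) / ⟪α, p.1⟫ ^ 2)) +
        N * |lapE (dunklWeight Rp κ) p| := by
  have hjump : |∑ α ∈ Rp, κ α * ((u p - u (reflAt α p.1, p.2)) / ⟪α, p.1⟫ ^ 2)| ≤
      ∑ α ∈ Rp, |κ α| * ((N + N) / ⟪α, p.1⟫ ^ 2) := by
    refine (Finset.abs_sum_le_sum_abs _ _).trans (Finset.sum_le_sum fun α hα ↦ ?_)
    rw [abs_mul, abs_div, abs_of_nonneg (sq_nonneg ⟪α, p.1⟫)]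
    gcongr
    exact (abs_sub _ _).trans (add_le_add hbd (hrefl α hα))
  have hpos := dunklWeight_pos Rp κ p
  rw [lapE_dunklWeight_mul κ hp hu, hlap, zero_add]
  refine (abs_add_le _ _).trans ?_
  rw [abs_mul, abs_mul, abs_mul, abs_two, abs_of_pos hpos]
  gcongr

theorem exists_bddGenLapOn_dunklWeight_mul (hK : IsCompact K)
    (hreg : ∀ p ∈ K, ∀ α ∈ Rp, ⟪α, p.1⟫ ≠ 0) (hSK : S ⊆ K) (hu : ∀ p ∈ S, ContDiffAt ℝ 2 u p)
    (hlap : ∀ p ∈ S, dunklLap Rp κ u p = 0) (hbd : ∀ p ∈ S, |u p| ≤ N)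
    (hrefl : ∀ p ∈ S, ∀ α ∈ Rp, |u (reflAt α p.1, p.2)| ≤ N) :
    ∃ M, BddGenLapOn (fun q ↦ dunklWeight Rp κ q * u q) S M := by
  have hw (p) (hp : p ∈ K) := contDiffAt_dunklWeight κ (hreg p hp)
  have hw₀ : ContinuousOn (dunklWeight Rp κ) K := fun p hp ↦
    (hw p hp).continuousAt.continuousWithinAt
  have hw₁ : ContinuousOn (lapE (dunklWeight Rp κ)) K := fun p hp ↦
    (continuousAt_lapE (hw p hp)).continuousWithinAt
  have hinv : ContinuousOn (fun p ↦ ∑ α ∈ Rp, |κ α| * ((N + N) / ⟪α, p.1⟫ ^ 2)) K :=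
    continuousOn_finsetSum _ fun α hα ↦ continuousOn_const.mul
      (continuousOn_const.div (by fun_prop) fun p hp ↦ pow_ne_zero 2 (hreg p hp α hα))
  obtain ⟨M₀, hM₀⟩ := hK.exists_bound_of_continuousOn (hw₀.mul_const N)
  obtain ⟨M₁, hM₁⟩ := hK.exists_bound_of_continuousOn
    ((hw₀.mul (hinv.const_mul 2)).add (hw₁.abs.const_mul N))
  refine ⟨max M₀ M₁, fun p hp ↦ ?_, fun p hp ↦ le_max_of_le_left ?_,
    fun p hp ↦ ⟨_, le_max_of_le_right ?_, hasGenLap_of_contDiffAt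
      ((hw p (hSK hp)).mul (hu p hp))⟩⟩
  · exact ((hw p (hSK hp)).continuousAt.mul (hu p hp).continuousAt).continuousWithinAt
  · have hpos := dunklWeight_pos Rp κ p
    rw [abs_mul, abs_of_pos hpos]
    exact (mul_le_mul_of_nonneg_left (hbd p hp) hpos.le).trans
      ((Real.le_norm_self _).trans (hM₀ p (hSK hp)))
  · exact (abs_lapE_dunklWeight_mul_le (hreg p (hSK hp)) (hu p hp) (hlap p hp) (hbd p hp)
      (hrefl p hp)).trans ((Real.le_norm_self _).trans (hM₁ p (hSK hp)))

end DunklWeight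

/-! ### Reflections -/

section Reflections

variable {d : ℕ} {R : Finset (Ed d)} {α : Ed d}

lemma reflAt_eq_reflection (hα : ⟪α, α⟫ = (2 : ℝ)) (x : Ed d) :
    reflAt α x = (ℝ ∙ α)ᗮ.reflection x := by
  have hnorm : ‖α‖ ^ 2 = 2 := by rw [← real_inner_self_eq_norm_sq, hα]
  rw [Submodule.reflection_orthogonal_apply, Submodule.reflection_singleton_apply, reflAt]
  simp only [RCLike.ofReal_real_eq_id, id, hnorm, neg_sub]
  rw [two_smul, ← add_smul, add_halves]

lemma dist_reflAt (hα : ⟪α, α⟫ = (2 : ℝ)) (x y : Ed d) :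
    dist (reflAt α x) (reflAt α y) = dist x y := by
  rw [reflAt_eq_reflection hα, reflAt_eq_reflection hα, LinearIsometryEquiv.dist_map]

lemma ae_reflAt (hα : ⟪α, α⟫ = (2 : ℝ)) {P : Ed d → Prop} (h : ∀ᵐ x, P x) :
    ∀ᵐ x, P (reflAt α x) := by
  have := ((ℝ ∙ α)ᗮ.reflection.measurePreserving).quasiMeasurePreserving.ae h
  simpa only [reflAt_eq_reflection hα] using this

lemma ae_isRegular (hR : ∀ α ∈ R, α ≠ 0) : ∀ᵐ x, isRegular R x := by
  refine (ae_ball_iff R.countable_toSet).2 fun α hα ↦ ?_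
  have hproper : (ℝ ∙ α)ᗮ ≠ ⊤ := by
    simpa [Submodule.orthogonal_eq_top_iff] using hR α hα
  refine measure_mono_null (fun x hx ↦ ?_) (Measure.addHaar_submodule volume _ hproper)
  rw [SetLike.mem_coe, Submodule.mem_orthogonal_singleton_iff_inner_right]
  simpa using hx

lemma GInvSet.mapsTo_reflAt {E : Set (Ed d)} (hE : GInvSet R E) (hα : α ∈ R) :
    Set.MapsTo (reflAt α) E E := by
  have h := hE (reflAt α) (Submonoid.subset_closure ⟨α, hα, rfl⟩)
  exact Set.mapsTo_iff_image_subset.2 h.subset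

end Reflections

/-! ### Exhaustion by compact sets of uniform boundedness -/

section Exhaustion

variable {d : ℕ} {R Rp : Finset (Ed d)} {κ : Ed d → ℝ} {u : Ed d × ℝ → ℝ} {N δ ε : ℝ}
  {x y : Ed d} {p : Ed d × ℝ}

/-- The points of the ball of radius `N` which stay away from all reflecting hyperplanes, the
distance to the hyperplane of `α` being measured by `|⟨α,x⟩|`. -/
def regularBall (R : Finset (Ed d)) (N δ : ℝ) : Set (Ed d) :=
  {x | ‖x‖ ≤ N ∧ ∀ α ∈ R, δ ≤ |⟪α, x⟫|}

lemma isCompact_regularBall (R : Finset (Ed d)) (N δ : ℝ) : IsCompact (regularBall R N δ) := by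
  have hclosed : IsClosed {x : Ed d | ∀ α ∈ R, δ ≤ |⟪α, x⟫|} := by
    simp only [Set.ofPred_forall]
    exact isClosed_biInter fun α _ ↦ isClosed_le continuous_const (by fun_prop)
  refine (isCompact_closedBall (0 : Ed d) N).of_isClosed_subset
    ((isClosed_le continuous_norm continuous_const).inter hclosed) fun x hx ↦ ?_
  simpa using hx.1

lemma isRegular_of_mem_regularBall (hδ : 0 < δ) (hx : x ∈ regularBall R N δ) : isRegular R x :=
  fun α hα ↦ abs_pos.1 (hδ.trans_le (hx.2 α hα))

lemma mem_regularBall_of_dist_le (hR : ∀ α ∈ R, ⟪α, α⟫ = (2 : ℝ)) (hx : x ∈ regularBall R N δ)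
    (hyx : dist y x ≤ ε) : y ∈ regularBall R (N + ε) (δ - 2 * ε) := by
  rw [dist_eq_norm'] at hyx
  refine ⟨?_, fun α hα ↦ ?_⟩
  · linarith [norm_le_norm_add_norm_sub x y, hx.1]
  · have hα₂ : ‖α‖ ≤ 2 := by nlinarith [norm_nonneg α, real_inner_self_eq_norm_sq α, hR α hα]
    have hdiff : |⟪α, x⟫| - |⟪α, y⟫| ≤ 2 * ε := calc
      |⟪α, x⟫| - |⟪α, y⟫| ≤ |⟪α, x - y⟫| := by
        rw [inner_sub_right]
        exact abs_sub_abs_le_abs_sub _ _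
      _ ≤ ‖α‖ * ‖x - y‖ := abs_real_inner_le_norm _ _
      _ ≤ 2 * ε := by gcongr
    linarith [hx.2 α hα]

/-- The points of `regularBall R N δ` such that `u` and its reflections in the roots of `Rp` are
bounded by `N` on the cone of aperture and height `δ / 2` with vertex `(x,0)`. -/
def uniformNTBoundedSet (R Rp : Finset (Ed d)) (u : Ed d × ℝ → ℝ) (N δ : ℝ) : Set (Ed d) :=
  {x ∈ regularBall R N δ | ∀ p ∈ coneT (δ / 2) (δ / 2) x,
    |u p| ≤ N ∧ ∀ α ∈ Rp, |u (reflAt α p.1, p.2)| ≤ N}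

lemma isClosed_forall_mem_coneT (a h : ℝ) (P : Ed d × ℝ → Prop) :
    IsClosed {x : Ed d | ∀ p ∈ coneT a h x, P p} := by
  have hopen (p : Ed d × ℝ) : IsOpen {x : Ed d | p ∈ coneT a h x} :=
    isOpen_const.inter (isOpen_const.inter
      (isOpen_lt (continuous_const.dist continuous_id) continuous_const))
  simp only [Set.ofPred_forall]
  exact isClosed_iInter fun p ↦ isClosed_imp (hopen p) isClosed_const

lemma isCompact_uniformNTBoundedSet (R Rp : Finset (Ed d)) (u : Ed d × ℝ → ℝ) (N δ : ℝ) :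
    IsCompact (uniformNTBoundedSet R Rp u N δ) :=
  (isCompact_regularBall R N δ).inter_right (isClosed_forall_mem_coneT _ _ _)

lemma sawtooth_uniformNTBoundedSet (hR : ∀ α ∈ R, ⟪α, α⟫ = (2 : ℝ)) (hδ : 0 < δ) (hδ₁ : δ ≤ 1)
    (hne : (uniformNTBoundedSet R Rp u N δ).Nonempty)
    (hp : p ∈ sawtooth (uniformNTBoundedSet R Rp u N δ) (δ / 2) (δ / 2)) :
    p.1 ∈ regularBall R (N + δ / 4) (δ - 2 * (δ / 4)) ∧ |u p| ≤ N ∧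
      ∀ α ∈ Rp, |u (reflAt α p.1, p.2)| ≤ N := by
  obtain ⟨hp₀, hph, hpF⟩ := hp
  obtain ⟨x, hx, hpx⟩ := (infDist_lt_iff hne).1 hpF
  exact ⟨mem_regularBall_of_dist_le hR hx.1 (by nlinarith), hx.2 p ⟨hp₀, hph, hpx⟩⟩

lemma KHarmonicOn.contDiffAt (hu : KHarmonicOn R Rp κ u (upperHS d)) (hp : 0 < p.2) :
    ContDiffAt ℝ 2 u p :=
  hu.1.contDiffAt ((isOpen_lt continuous_const continuous_snd).mem_nhds hp)

lemma KHarmonicOn.exists_bddGenLapOn_sawtooth (hu : KHarmonicOn R Rp κ u (upperHS d))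
    (hR : ∀ α ∈ R, ⟪α, α⟫ = (2 : ℝ)) (hRp : Rp ⊆ R) (hδ : 0 < δ) (hδ₁ : δ ≤ 1)
    (hne : (uniformNTBoundedSet R Rp u N δ).Nonempty) :
    ∃ M, BddGenLapOn (fun q ↦ dunklWeight Rp κ q * u q)
      (sawtooth (uniformNTBoundedSet R Rp u N δ) (δ / 2) (δ / 2)) M := by
  have hsaw {p} := sawtooth_uniformNTBoundedSet (p := p) hR hδ hδ₁ hne
  have hreg {x} (hx : x ∈ regularBall R (N + δ / 4) (δ - 2 * (δ / 4))) : isRegular R x :=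
    isRegular_of_mem_regularBall (by linarith) hx
  exact exists_bddGenLapOn_dunklWeight_mul ((isCompact_regularBall _ _ _).prod isCompact_Icc)
    (fun _ hp α hα ↦ hreg hp.1 α (hRp hα)) (fun _ hp ↦ ⟨(hsaw hp).1, hp.1.le, hp.2.1.le⟩)
    (fun _ hp ↦ hu.contDiffAt hp.1) (fun p hp ↦ hu.2 p hp.1 (hreg (hsaw hp).1))
    (fun _ hp ↦ (hsaw hp).2.1) (fun _ hp ↦ (hsaw hp).2.2)

theorem KHarmonicOn.ae_hasNTLimit_of_mem_uniformNTBoundedSet (hu : KHarmonicOn R Rp κ u (upperHS d))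
    (hR : ∀ α ∈ R, ⟪α, α⟫ = (2 : ℝ)) (hRp : Rp ⊆ R) (hδ : 0 < δ) (hδ₁ : δ ≤ 1) :
    ∀ᵐ x, x ∈ uniformNTBoundedSet R Rp u N δ → HasNTLimit u x := by
  rcases (uniformNTBoundedSet R Rp u N δ).eq_empty_or_nonempty with hempty | hne
  · simp [hempty]
  obtain ⟨M, hM⟩ := hu.exists_bddGenLapOn_sawtooth hR hRp hδ hδ₁ hne
  filter_upwards [ae_exists_tendsto_of_bddGenLapOn_sawtooth
    (isCompact_uniformNTBoundedSet R Rp u N δ) (half_pos hδ) (half_pos hδ) hM] with x hx hxF A _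
  obtain ⟨L, hL⟩ := hx hxF
  have hreg : isRegular R x := isRegular_of_mem_regularBall hδ hxF.1
  have hw : ContinuousAt (dunklWeight Rp κ) (x, (0 : ℝ)) :=
    (contDiffAt_dunklWeight κ fun α hα ↦ hreg α (hRp hα)).continuousAt
  refine ⟨L / dunklWeight Rp κ (x, 0), ((hL A).div (hw.mono_left nhdsWithin_le_nhds)
    (dunklWeight_pos Rp κ _).ne').congr fun q ↦ ?_⟩
  exact mul_div_cancel_left₀ _ (dunklWeight_pos Rp κ q).ne'

lemma NTBounded.eventually_forall_coneT (hu : NTBounded u x) :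
    ∀ᶠ n : ℕ in atTop, ∀ p ∈ coneT (1 / ((n : ℝ) + 1) / 2) (1 / ((n : ℝ) + 1) / 2) x,
      |u p| ≤ n := by
  obtain ⟨a, ha, h, hh, M, hM⟩ := hu
  have hlim : Tendsto (fun n : ℕ ↦ 1 / ((n : ℝ) + 1) / 2) atTop (𝓝 0) := by
    simpa using tendsto_one_div_add_atTop_nhds_zero_nat (𝕜 := ℝ).div_const 2
  filter_upwards [hlim.eventually (gt_mem_nhds ha), hlim.eventually (gt_mem_nhds hh),
    tendsto_natCast_atTop_atTop.eventually (eventually_ge_atTop M)] with n hna hnh hnM p hp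
  obtain ⟨hp₀, hph, hpx⟩ := hp
  exact (hM p ⟨hp₀, hph.trans hnh, hpx.trans (mul_lt_mul_of_pos_right hna hp₀)⟩).trans hnM

lemma exists_mem_uniformNTBoundedSet (hRp : ∀ α ∈ Rp, ⟪α, α⟫ = (2 : ℝ)) (hx : isRegular R x)
    (hu : NTBounded u x) (hrefl : ∀ α ∈ Rp, NTBounded u (reflAt α x)) :
    ∃ n : ℕ, x ∈ uniformNTBoundedSet R Rp u n (1 / ((n : ℝ) + 1)) := by
  have hfar : ∀ᶠ n : ℕ in atTop, ∀ α ∈ R, 1 / ((n : ℝ) + 1) ≤ |⟪α, x⟫| :=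
    (Finset.eventually_all R).2 fun α hα ↦
      (tendsto_one_div_add_atTop_nhds_zero_nat (𝕜 := ℝ)).eventually
        (ge_mem_nhds (abs_pos.2 (hx α hα)))
  have hbdRefl := (Finset.eventually_all Rp).2 fun α hα ↦ (hrefl α hα).eventually_forall_coneT
  have hnorm : ∀ᶠ n : ℕ in atTop, ‖x‖ ≤ n :=
    tendsto_natCast_atTop_atTop.eventually (eventually_ge_atTop ‖x‖)
  obtain ⟨n, hxn, hfar, hbd, hbdRefl⟩ :=
    (hnorm.and (hfar.and (hu.eventually_forall_coneT.and hbdRefl))).exists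
  refine ⟨n, ⟨hxn, hfar⟩, fun p hp ↦ ⟨hbd p hp, fun α hα ↦ hbdRefl α hα _ ⟨hp.1, hp.2.1, ?_⟩⟩⟩
  exact (dist_reflAt (hRp α hα) p.1 x).trans_lt hp.2.2

lemma HasNTLimit.ntBounded (h : HasNTLimit u x) : NTBounded u x := by
  obtain ⟨L, hL⟩ := h 1 one_pos
  obtain ⟨r, hr, hball⟩ := Metric.mem_nhdsWithin_iff.1
    (hL.abs.eventually (gt_mem_nhds (lt_add_one |L|)))
  refine ⟨1, one_pos, r, hr, |L| + 1, fun p ⟨hp₀, hpr, hpx⟩ ↦ le_of_lt (hball ⟨?_, hp₀, hpx⟩)⟩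
  rw [mem_ball, Prod.dist_eq, max_lt_iff]
  exact ⟨by linarith, by simpa [abs_of_pos hp₀] using hpr⟩

end Exhaustion

theorem dunkl_fatou_ntlimit_iff_ntbounded_general {d : ℕ} {R Rp : Finset (Ed d)} {κ : Ed d → ℝ}
    (hR : ∀ α ∈ R, ⟪α, α⟫ = (2 : ℝ)) (hRp : Rp ⊆ R) {E : Set (Ed d)}
    (hE : ∀ α ∈ Rp, Set.MapsTo (reflAt α) E E) {u : Ed d × ℝ → ℝ}
    (hu : KHarmonicOn R Rp κ u (upperHS d)) :
    (∀ᵐ x : Ed d, x ∈ E → HasNTLimit u x) ↔ (∀ᵐ x : Ed d, x ∈ E → NTBounded u x) := by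
  have hRp₂ (α) (hα : α ∈ Rp) := hR α (hRp hα)
  refine ⟨fun h ↦ h.mono fun x hx hxE ↦ (hx hxE).ntBounded, fun h ↦ ?_⟩
  have hlimit : ∀ᵐ x, ∀ n : ℕ,
      x ∈ uniformNTBoundedSet R Rp u n (1 / ((n : ℝ) + 1)) → HasNTLimit u x :=
    ae_all_iff.2 fun n ↦ hu.ae_hasNTLimit_of_mem_uniformNTBoundedSet hR hRp Nat.one_div_pos_of_nat
      (div_le_one_of_le₀ (by simp) (by positivity))
  have hrefl : ∀ᵐ x, ∀ α ∈ Rp, reflAt α x ∈ E → NTBounded u (reflAt α x) :=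
    (ae_ball_iff Rp.countable_toSet).2 fun α hα ↦ ae_reflAt (hRp₂ α hα) h
  have hregular : ∀ᵐ x, isRegular R x :=
    ae_isRegular fun α hα h0 ↦ by simpa [h0] using hR α hα
  filter_upwards [h, hlimit, hrefl, hregular] with x hx hlim hxrefl hreg hxE
  obtain ⟨n, hn⟩ := exists_mem_uniformNTBoundedSet hRp₂ hreg (hx hxE)
    fun α hα ↦ hxrefl α hα (hE α hα hxE)
  exact hlim n hn

/-- **Theorem 1.** For a `G`-invariant measurable `E ⊆ ℝ^d` and `u` `κ`-harmonic in
`ℝ^{d+1}₊`, `u` has a finite non-tangential limit at `(x,0)` for a.e. `x ∈ E` iff `u` is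
non-tangentially bounded at `(x,0)` for a.e. `x ∈ E`. -/
theorem dunkl_fatou_ntlimit_iff_ntbounded
    {d : ℕ} (hd : 1 ≤ d) (R Rp : Finset (Ed d)) (κ : Ed d → ℝ)
    (hRS : IsRootSystem R Rp κ)
    (E : Set (Ed d)) (hEm : MeasurableSet E) (hEinv : GInvSet R E)
    (u : Ed d × ℝ → ℝ) (hu : KHarmonicOn R Rp κ u (upperHS d)) :
    (∀ᵐ x : Ed d, x ∈ E → HasNTLimit u x) ↔ (∀ᵐ x : Ed d, x ∈ E → NTBounded u x) := by
  exact dunkl_fatou_ntlimit_iff_ntbounded_general hRS.norm_two hRS.pos_sub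
    (fun _ hα ↦ hEinv.mapsTo_reflAt (hRS.pos_sub hα)) hu

end
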